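/- All zeros of the entire function Z₁(s) lie on the line Re(s) = 1/2 except for the four real zeros s = 0, 1/3, 2/3, 1; that is, every zero ρ of Z₁ with ρ ∉ {0, 1/3, 2/3, 1} satisfies Re(ρ) = 1/2, and moreover each of 0, 1/3, 2/3, 1 is a simple zero of Z₁ (Z₁ vanishes there but its derivative does not). -/

import Mathlib

open Complex

noncomputable def chi (s : ℂ) : ℂ := s * (s - 1) * completedRiemannZeta₀ s + 1

noncomputable def A : ℂ := Real.pi / 3 - 1

noncomputable def f1 (s : ℂ) : ℂ :=
  (s - 1) * ((s - 1) * (3 * s - 2) * (A * s - A + 1) * chi (s + 1) * chi (3 * s)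
    - (s + 1) * (s - 2) * chi s * chi (3 * s - 1)
    - 2 * (s - 1) * (s - 2) * chi s * chi (3 * s))

noncomputable def f2 (s : ℂ) : ℂ :=
  (s - 2) * ((A * s + 3) * (s - 1) ^ 2 * chi (s + 2)
    - 2 * (s - 1) * (s - 3) * chi (s + 1)
    - (s + 2) * (s - 3) * chi s)

noncomputable def Z1 (s : ℂ) : ℂ := chi (2 * s) * f1 s - chi (2 * s - 1) * f1 (1 - s)

noncomputable def Z2 (s : ℂ) : ℂ := chi (2 * s) * f2 s - chi (2 * s - 1) * f2 (1 - s)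

/-!
Put `γ(s) = χ(2s) f₁(s) / (s - 1) - κ s χ(s) χ(3s - 1) (χ(2s) + χ(2s - 1))`. Then
`Z₁(s) = (s - 1) γ(s) + s γ(1 - s)` for every constant `κ`, and for a suitable `κ` the function `γ`
vanishes at `1/3` and `2/3` as well as at `0`. Hence
`Z₁(s) = s (s - 1) (s - 1/3) (s - 2/3) (k(s) - k(1 - s))` with `k` entire. Divided by
`χ(2s) χ(s + 1) χ(3s)` and multiplied by a suitable rational function, `k` has positive real part
on the critical line: up to height `20` by rigorous numerics, beyond by elementary estimates. By
Phragmén–Lindelöf the same holds to the right of the line, so `k(1 - s) / k(s)` is holomorphic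
there. It has modulus `1` on the line, hence at most `1` to the right of it, and by the maximum
principle it does not take the value `1` there.

The information about `χ` comes from two sources. The entire part `Λ₀` of the completed zeta
function is the moment generating function of a positive measure, hence a power series in
`(s - 1/2)²` with nonnegative coefficients, which can be enclosed by interpolating its values at
even integers. And `|χ(w)| ≤ |χ(w + 1)|` for `0 ≤ re w`, which the Schwarz–Pick lemma and the
values at `w = 1, 2` sharpen to enclosures of `χ(w) / χ(w + 1)`.
-/

namespace XiQuotient

/-! ### The completed zeta function as a moment generating function -/

section ThetaMeasure

open MeasureTheory ProbabilityTheory Set HurwitzZeta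

/-- The kernel whose Mellin transform is `2 * completedRiemannZeta₀ (2 * s)`: the Jacobi theta
function minus its asymptotic main terms at infinity and at the origin. -/
noncomputable def thetaKernel (x : ℝ) : ℝ :=
  (Ioi (1 : ℝ)).indicator (fun x => evenKernel 0 x - 1) x +
    (Ioo (0 : ℝ) 1).indicator (fun x => evenKernel 0 x - x ^ (-(1 / 2) : ℝ)) x

lemma one_le_evenKernel_zero {x : ℝ} (hx : 0 < x) : 1 ≤ evenKernel 0 x := by
  have hsum := hasSum_int_evenKernel₀ 0 hx
  simp only [AddCircle.coe_zero, if_true] at hsum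
  refine sub_nonneg.mp (hsum.nonneg fun n => ?_)
  split_ifs <;> positivity

lemma thetaKernel_nonneg (x : ℝ) : 0 ≤ thetaKernel x := by
  refine add_nonneg (indicator_nonneg (fun x hx => ?_) x) (indicator_nonneg (fun x hx => ?_) x)
  · exact sub_nonneg.mpr (one_le_evenKernel_zero (zero_lt_one.trans hx))
  · have hinv := one_le_evenKernel_zero (one_div_pos.mpr hx.1)
    have hpow : 0 < (x ^ (1 / 2 : ℝ))⁻¹ := by have := hx.1; positivity
    rw [evenKernel_functional_equation, ← evenKernel_eq_cosKernel_of_zero,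
      Real.rpow_neg hx.1.le, one_div (x ^ _)]
    nlinarith

lemma ofReal_comp_thetaKernel : (fun x => (thetaKernel x : ℂ)) = (hurwitzEvenFEPair 0).f_modif := by
  funext x
  simp only [thetaKernel, WeakFEPair.f_modif, hurwitzEvenFEPair, Pi.add_apply, indicator]
  push_cast
  congr 1 <;> split_ifs <;> simp

lemma completedRiemannZeta₀_eq_mellin (s : ℂ) :
    completedRiemannZeta₀ s = mellin (fun x => (thetaKernel x : ℂ)) (s / 2) / 2 := by
  rw [ofReal_comp_thetaKernel]
  rfl

lemma mellinConvergent_thetaKernel (s : ℂ) :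
    MellinConvergent (fun x => (thetaKernel x : ℂ)) s := by
  rw [ofReal_comp_thetaKernel]
  exact ((hurwitzEvenFEPair 0).isStrongFEPair_toStrongFEPair.hasMellin s).1

/-- The density, with respect to `dx` on `(0, ∞)`, of the measure whose moment generating function
in the variable `log x / 2` is `completedRiemannZeta₀ (1 / 2 + z)`. -/
noncomputable def thetaDensity (x : ℝ) : ℝ := x ^ (-(3 / 4) : ℝ) * thetaKernel x / 2

/-- The positive measure with density `thetaDensity` on `(0, ∞)`. -/
noncomputable def thetaMeasure : Measure ℝ :=
  (volume.restrict (Ioi 0)).withDensity fun x => ENNReal.ofReal (thetaDensity x)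

lemma thetaDensity_nonneg {x : ℝ} (hx : 0 < x) : 0 ≤ thetaDensity x := by
  have := thetaKernel_nonneg x
  unfold thetaDensity
  positivity

lemma thetaDensity_mul_cexp {x : ℝ} (hx : 0 < x) (z : ℂ) :
    (thetaDensity x : ℂ) * cexp (z * (Real.log x / 2 : ℝ)) =
      (x : ℂ) ^ ((1 / 2 + z) / 2 - 1) * thetaKernel x / 2 := by
  have hx' : (x : ℂ) ≠ 0 := ofReal_ne_zero.mpr hx.ne'
  have hexp : ((1 / 2 + z) / 2 - 1 : ℂ) = ((-(3 / 4) : ℝ) : ℂ) + z / 2 := by push_cast; ring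
  rw [thetaDensity, hexp, cpow_add _ _ hx', ← ofReal_cpow hx.le, cpow_def_of_ne_zero hx' (z / 2),
    ← ofReal_log hx.le]
  push_cast
  rw [show (Real.log x : ℂ) * (z / 2) = z * (Real.log x / 2) by ring]
  ring

lemma integrable_thetaDensity_mul_cexp (z : ℂ) :
    IntegrableOn (fun x => (thetaDensity x : ℂ) * cexp (z * (Real.log x / 2 : ℝ))) (Ioi 0) := by
  refine ((mellinConvergent_thetaKernel ((1 / 2 + z) / 2)).div_const 2).congr_fun (fun x hx => ?_)
    measurableSet_Ioi
  simp only [thetaDensity_mul_cexp hx, smul_eq_mul, mul_div_assoc]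

lemma aemeasurable_thetaDensity : AEMeasurable thetaDensity (volume.restrict (Ioi 0)) := by
  simpa using (integrable_thetaDensity_mul_cexp 0).re.aestronglyMeasurable.aemeasurable

lemma complexMGF_thetaMeasure (z : ℂ) :
    complexMGF (fun x => Real.log x / 2) thetaMeasure z = completedRiemannZeta₀ (1 / 2 + z) := by
  rw [complexMGF, thetaMeasure,
    integral_withDensity_eq_integral_toReal_smul₀ aemeasurable_thetaDensity.ennreal_ofReal
      (Filter.Eventually.of_forall fun _ => ENNReal.ofReal_lt_top),
    completedRiemannZeta₀_eq_mellin, mellin, ← integral_div]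
  refine setIntegral_congr_fun measurableSet_Ioi fun x hx => ?_
  simp only [ENNReal.toReal_ofReal (thetaDensity_nonneg hx), real_smul, smul_eq_mul]
  exact thetaDensity_mul_cexp hx z

lemma integrableExpSet_thetaMeasure :
    integrableExpSet (fun x => Real.log x / 2) thetaMeasure = univ := by
  refine eq_univ_of_forall fun t => ?_
  rw [integrableExpSet, mem_ofPred_eq, thetaMeasure,
    integrable_withDensity_iff_integrable_smul₀' aemeasurable_thetaDensity.ennreal_ofReal
      (Filter.Eventually.of_forall fun _ => ENNReal.ofReal_lt_top)]
  refine (integrable_thetaDensity_mul_cexp t).re.congr ?_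
  filter_upwards [ae_restrict_mem measurableSet_Ioi] with x hx
  rw [ENNReal.toReal_ofReal (thetaDensity_nonneg hx), ← ofReal_mul, ← ofReal_exp, ← ofReal_mul]
  rfl

lemma norm_completedRiemannZeta₀_le (s : ℂ) :
    ‖completedRiemannZeta₀ s‖ ≤ (completedRiemannZeta₀ s.re).re := by
  have h := norm_complexMGF_le_mgf (X := fun x => Real.log x / 2) (μ := thetaMeasure)
    (z := s - 1 / 2)
  rw [← re_complexMGF_ofReal, complexMGF_thetaMeasure, complexMGF_thetaMeasure] at h
  convert h using 4 <;> simp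

end ThetaMeasure

/-! ### Entire functions with nonnegative Taylor coefficients -/

section PowerSeries

open scoped Nat

lemma hasFPowerSeriesOnBall_top_of_hasSum {c : ℕ → ℂ} {f : ℂ → ℂ}
    (hf : ∀ z, HasSum (fun n => c n * z ^ n) (f z)) :
    HasFPowerSeriesOnBall f (FormalMultilinearSeries.ofScalars ℂ c) 0 ⊤ where
  r_le := by
    refine (FormalMultilinearSeries.radius_eq_top_of_summable_norm _ fun r => ?_).ge
    simpa [FormalMultilinearSeries.ofScalars_norm] using (hf (r : ℝ)).summable.norm
  r_pos := by simp
  hasSum {z} _ := by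
    simpa [FormalMultilinearSeries.ofScalars_apply_eq, mul_comm] using hf z

lemma differentiable_of_hasSum {c : ℕ → ℂ} {f : ℂ → ℂ}
    (hf : ∀ z, HasSum (fun n => c n * z ^ n) (f z)) : Differentiable ℂ f := fun z =>
  ((hasFPowerSeriesOnBall_top_of_hasSum hf).analyticAt_of_mem (by simp)).differentiableAt

lemma eq_of_hasSum_pow {b c : ℕ → ℂ} {f : ℂ → ℂ} (hb : ∀ z, HasSum (fun n => b n * z ^ n) (f z))
    (hc : ∀ z, HasSum (fun n => c n * z ^ n) (f z)) : b = c :=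
  (FormalMultilinearSeries.ofScalars_series_injective ℂ ℂ)
    ((hasFPowerSeriesOnBall_top_of_hasSum hb).hasFPowerSeriesAt.eq_formalMultilinearSeries
      (hasFPowerSeriesOnBall_top_of_hasSum hc).hasFPowerSeriesAt)

lemma exists_hasSum_of_differentiable {f : ℂ → ℂ} (hf : Differentiable ℂ f) :
    ∃ c : ℕ → ℂ, ∀ z, HasSum (fun n => c n * z ^ n) (f z) := by
  refine ⟨fun n => (n ! : ℂ)⁻¹ * iteratedDeriv n f 0, fun z => ?_⟩
  convert! hasSum_taylorSeries_of_entire hf 0 z using 2 with n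
  simp only [smul_eq_mul, sub_zero]
  ring

lemma hasSum_even {c : ℕ → ℂ} {f : ℂ → ℂ} (hc : ∀ z, HasSum (fun n => c n * z ^ n) (f z))
    (hf : ∀ z, f (-z) = f z) (z : ℂ) : HasSum (fun n => c (2 * n) * (z ^ 2) ^ n) (f z) := by
  have hsym := ((hc z).add (hf z ▸ hc (-z))).div_const 2
  rw [add_self_div_two, ← (mul_right_injective₀ (two_ne_zero' ℕ)).hasSum_iff] at hsym
  · convert! hsym using 2 with n
    simp only [Function.comp_apply, pow_mul, neg_sq]
    ring
  · intro n hn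
    have hodd : Odd n := Nat.not_even_iff_odd.mp fun ⟨k, hk⟩ => hn ⟨k, by simp [hk, two_mul]⟩
    rw [hodd.neg_pow]
    ring

lemma hasSum_complexMGF {Ω : Type*} [MeasurableSpace Ω] {X : Ω → ℝ} {μ : MeasureTheory.Measure Ω}
    (h : ProbabilityTheory.integrableExpSet X μ = Set.univ) (z : ℂ) :
    HasSum (fun n : ℕ => (((∫ ω, X ω ^ n ∂μ) / n ! : ℝ) : ℂ) * z ^ n)
      (ProbabilityTheory.complexMGF X μ z) := by
  have hmem (w : ℂ) : w.re ∈ interior (ProbabilityTheory.integrableExpSet X μ) := by simp [h]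
  have hdiff : Differentiable ℂ (ProbabilityTheory.complexMGF X μ) := fun w =>
    (ProbabilityTheory.analyticAt_complexMGF (hmem w)).differentiableAt
  convert! hasSum_taylorSeries_of_entire hdiff 0 z using 2 with n
  rw [ProbabilityTheory.iteratedDeriv_complexMGF (hmem 0)]
  simp only [zero_mul, exp_zero, mul_one, sub_zero, smul_eq_mul, ofReal_div, ofReal_natCast,
    ← ofReal_pow, integral_complex_ofReal]
  ring

end PowerSeries

/-- The entire functions whose Taylor coefficients at the origin are nonnegative reals. -/
def HasNonnegCoeffs (f : ℂ → ℂ) : Prop :=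
  ∃ c : ℕ → ℝ, (∀ n, 0 ≤ c n) ∧ ∀ z : ℂ, HasSum (fun n => (c n : ℂ) * z ^ n) (f z)

namespace HasNonnegCoeffs

variable {f : ℂ → ℂ}

lemma hasSum_re_ofReal {c : ℕ → ℝ} (hf : ∀ z : ℂ, HasSum (fun n => (c n : ℂ) * z ^ n) (f z))
    (x : ℝ) : HasSum (fun n => c n * x ^ n) (f x).re := by
  simpa [← ofReal_pow] using hasSum_re (hf x)

lemma apply_conj (hf : HasNonnegCoeffs f) (z : ℂ) :
    f ((starRingEnd ℂ) z) = (starRingEnd ℂ) (f z) := by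
  obtain ⟨c, -, hc⟩ := hf
  refine (hc _).unique ?_
  simpa using (hc z).mapL (conjCLE : ℂ →L[ℝ] ℂ)

lemma ofReal_re_apply (hf : HasNonnegCoeffs f) (x : ℝ) : ((f x).re : ℂ) = f x :=
  conj_eq_iff_re.mp <| by rw [← hf.apply_conj, conj_ofReal]

lemma norm_le (hf : HasNonnegCoeffs f) (z : ℂ) : ‖f z‖ ≤ (f ‖z‖).re := by
  obtain ⟨c, hc, hsum⟩ := hf
  rw [← (hsum z).tsum_eq]
  refine tsum_of_norm_bounded (hasSum_re_ofReal hsum ‖z‖) fun n => ?_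
  rw [norm_mul, norm_pow, norm_real, Real.norm_of_nonneg (hc n)]

lemma mono (hf : HasNonnegCoeffs f) {x y : ℝ} (hx : 0 ≤ x) (hxy : x ≤ y) :
    (f x).re ≤ (f y).re := by
  obtain ⟨c, hc, hsum⟩ := hf
  refine hasSum_le (fun n => ?_) (hasSum_re_ofReal hsum x) (hasSum_re_ofReal hsum y)
  exact mul_le_mul_of_nonneg_left (pow_le_pow_left₀ hx hxy n) (hc n)

lemma nonneg (hf : HasNonnegCoeffs f) {x : ℝ} (hx : 0 ≤ x) : 0 ≤ (f x).re := by
  obtain ⟨c, hc, hsum⟩ := hf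
  exact (hasSum_re_ofReal hsum x).nonneg fun n => mul_nonneg (hc n) (pow_nonneg hx n)

lemma norm_le_of_norm_le (hf : HasNonnegCoeffs f) {z : ℂ} {x : ℝ} (hz : ‖z‖ ≤ x) :
    ‖f z‖ ≤ (f x).re :=
  (hf.norm_le z).trans (hf.mono (norm_nonneg z) hz)

lemma coeff_recurrence {c : ℕ → ℝ} (hf : ∀ z : ℂ, HasSum (fun n => (c n : ℂ) * z ^ n) (f z))
    {b : ℕ → ℂ} {g : ℂ → ℂ} (hg : ∀ z : ℂ, HasSum (fun n => b n * z ^ n) (g z)) {x : ℝ}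
    (hfg : ∀ z, f z = f x + (z - x) * g z) :
    (c 0 : ℂ) = f x - x * b 0 ∧ ∀ n, (c (n + 1) : ℂ) = b n - x * b (n + 1) := by
  let d : ℕ → ℂ := fun n => n.casesOn (f x - x * b 0) fun n => b n - x * b (n + 1)
  suffices hd : ∀ z, HasSum (fun n => d n * z ^ n) (f z) by
    have hcd := eq_of_hasSum_pow hf hd
    exact ⟨congrFun hcd 0, fun n => congrFun hcd (n + 1)⟩
  intro z
  have htail := ((hg z).mul_left z).sub (((hasSum_nat_add_iff' 1).mpr (hg z)).mul_left (x : ℂ))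
  rw [← hasSum_nat_add_iff' 1, hfg z]
  convert! htail using 1
  · funext n
    simp only [d]
    ring
  · rw [Finset.sum_range_one, Finset.sum_range_one, show d 0 = f x - x * b 0 from rfl]
    ring

/-- The coefficients `b n` of the divided difference satisfy
`x ^ (n + 1) * b n = ∑ k > n, c k * x ^ k`. -/
lemma exists_divided_difference (hf : HasNonnegCoeffs f) {x : ℝ} (hx : 0 ≤ x) :
    ∃ g, HasNonnegCoeffs g ∧ ∀ z, f z = f x + (z - x) * g z := by
  obtain ⟨c, hc, hsum⟩ := hf
  have hdiff : Differentiable ℂ (dslope f x) := fun z =>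
    ((differentiableOn_dslope (Filter.univ_mem (f := nhds (x : ℂ)))).mpr
      (differentiable_of_hasSum hsum).differentiableOn).differentiableAt Filter.univ_mem
  have hfg (z : ℂ) : f z = f x + (z - x) * dslope f x z := by
    rw [← smul_eq_mul, sub_smul_dslope, add_sub_cancel]
  obtain ⟨b, hb⟩ := exists_hasSum_of_differentiable hdiff
  obtain ⟨hzero, hsucc⟩ := coeff_recurrence hsum hb hfg
  suffices hreal : ∀ n, ∃ r : ℝ, 0 ≤ r ∧ b n = r by
    choose r hr hbr using hreal
    exact ⟨dslope f x, ⟨r, hr, fun z => by simpa only [hbr] using hb z⟩, hfg⟩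
  intro n
  rcases hx.eq_or_lt with rfl | hpos
  · exact ⟨c (n + 1), hc _, by simpa using (hsucc n).symm⟩
  have htail : (x : ℂ) ^ (n + 1) * b n =
      f x - ∑ k ∈ Finset.range (n + 1), (c k : ℂ) * (x : ℂ) ^ k := by
    induction n with
    | zero => simp [hzero]
    | succ n ih => rw [Finset.sum_range_succ, ← sub_sub, ← ih, hsucc]; ring
  have hx' : (x : ℂ) ≠ 0 := ofReal_ne_zero.mpr hpos.ne'
  refine ⟨((f x).re - ∑ k ∈ Finset.range (n + 1), c k * x ^ k) / x ^ (n + 1),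
    div_nonneg (sub_nonneg.mpr ?_) (by positivity), ?_⟩
  · exact sum_le_hasSum _ (fun k _ => mul_nonneg (hc k) (pow_nonneg hx k))
      (hasSum_re_ofReal hsum x)
  · push_cast
    rw [ofReal_re_apply ⟨c, hc, hsum⟩, ← htail, mul_div_cancel_left₀ _ (pow_ne_zero _ hx')]

end HasNonnegCoeffs

lemma exists_hasNonnegCoeffs_completedRiemannZeta₀ :
    ∃ f, HasNonnegCoeffs f ∧ ∀ s, completedRiemannZeta₀ s = f ((s - 1 / 2) ^ 2) := by
  set c : ℕ → ℝ := fun n => (∫ x, (Real.log x / 2) ^ n ∂thetaMeasure) / n.factorial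
  have hsum (z : ℂ) : HasSum (fun n => (c n : ℂ) * z ^ n) (completedRiemannZeta₀ (1 / 2 + z)) :=
    complexMGF_thetaMeasure z ▸ hasSum_complexMGF integrableExpSet_thetaMeasure z
  have heven (z : ℂ) : completedRiemannZeta₀ (1 / 2 + -z) = completedRiemannZeta₀ (1 / 2 + z) := by
    rw [← completedRiemannZeta₀_one_sub]
    congr 1
    ring
  have hsq := hasSum_even hsum heven
  refine ⟨fun w => ∑' n, (c (2 * n) : ℂ) * w ^ n, ⟨fun n => c (2 * n), fun n => ?_, fun w => ?_⟩,
    fun s => ?_⟩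
  · exact div_nonneg (MeasureTheory.integral_nonneg fun x => by
      simp only [pow_mul]; positivity) (by positivity)
  · obtain ⟨z, rfl⟩ := IsAlgClosed.exists_pow_nat_eq w two_pos
    exact (hsq z).summable.hasSum
  · have hs := (hsq (s - 1 / 2)).tsum_eq
    rw [add_sub_cancel] at hs
    exact hs.symm

/-! ### Elementary properties of `chi` -/

/-- The entire function `f` with nonnegative Taylor coefficients for which
`completedRiemannZeta₀ s = f ((s - 1 / 2) ^ 2)`. -/
noncomputable def zetaSeries : ℂ → ℂ := exists_hasNonnegCoeffs_completedRiemannZeta₀.choose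

lemma hasNonnegCoeffs_zetaSeries : HasNonnegCoeffs zetaSeries :=
  exists_hasNonnegCoeffs_completedRiemannZeta₀.choose_spec.1

lemma completedRiemannZeta₀_eq_zetaSeries (s : ℂ) :
    completedRiemannZeta₀ s = zetaSeries ((s - 1 / 2) ^ 2) :=
  exists_hasNonnegCoeffs_completedRiemannZeta₀.choose_spec.2 s

lemma completedRiemannZeta₀_conj (s : ℂ) :
    completedRiemannZeta₀ ((starRingEnd ℂ) s) = (starRingEnd ℂ) (completedRiemannZeta₀ s) := by
  simp [completedRiemannZeta₀_eq_zetaSeries, ← hasNonnegCoeffs_zetaSeries.apply_conj,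
    map_ofNat (starRingEnd ℂ) 2]

lemma re_completedRiemannZeta₀_mono {x y : ℝ} (h : |x - 1 / 2| ≤ |y - 1 / 2|) :
    (completedRiemannZeta₀ x).re ≤ (completedRiemannZeta₀ y).re := by
  simpa [completedRiemannZeta₀_eq_zetaSeries] using
    hasNonnegCoeffs_zetaSeries.mono (sq_nonneg (x - 1 / 2)) (sq_le_sq.mpr h)

lemma re_completedRiemannZeta₀_nonneg (x : ℝ) : 0 ≤ (completedRiemannZeta₀ x).re := by
  simpa [completedRiemannZeta₀_eq_zetaSeries] using
    hasNonnegCoeffs_zetaSeries.nonneg (sq_nonneg (x - 1 / 2))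

lemma differentiable_chi : Differentiable ℂ chi := by
  have := differentiable_completedZeta₀
  unfold chi
  fun_prop

lemma chi_zero : chi 0 = 1 := by simp [chi]

lemma chi_one : chi 1 = 1 := by simp [chi]

lemma chi_one_sub (s : ℂ) : chi (1 - s) = chi s := by
  rw [chi, chi, completedRiemannZeta₀_one_sub]
  ring

lemma chi_conj (s : ℂ) : chi ((starRingEnd ℂ) s) = (starRingEnd ℂ) (chi s) := by
  simp [chi, completedRiemannZeta₀_conj]

lemma chi_eq_zetaSeries (s : ℂ) :
    chi s = ((s - 1 / 2) ^ 2 - 1 / 4) * zetaSeries ((s - 1 / 2) ^ 2) + 1 := by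
  rw [chi, completedRiemannZeta₀_eq_zetaSeries]
  ring

lemma ofReal_re_chi (x : ℝ) : ((chi x).re : ℂ) = chi x :=
  conj_eq_iff_re.mp <| by rw [← chi_conj, conj_ofReal]

lemma re_chi_ofReal (x : ℝ) : (chi x).re = x * (x - 1) * (completedRiemannZeta₀ x).re + 1 := by
  rw [chi, ← ofReal_one, ← ofReal_sub, ← ofReal_mul, add_re, re_ofReal_mul, ofReal_re]

lemma re_chi_mono {x y : ℝ} (hx : 1 ≤ x) (hxy : x ≤ y) : (chi x).re ≤ (chi y).re := by
  have hmono : (completedRiemannZeta₀ x).re ≤ (completedRiemannZeta₀ y).re :=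
    re_completedRiemannZeta₀_mono <| abs_le_abs_of_nonneg (by linarith) (by linarith)
  have hnonneg := re_completedRiemannZeta₀_nonneg x
  have hfactor : 0 ≤ y * (y - 1) := mul_nonneg (by linarith) (by linarith)
  rw [re_chi_ofReal, re_chi_ofReal]
  gcongr
  linarith

lemma one_le_re_chi {x : ℝ} (hx : 1 ≤ x) : 1 ≤ (chi x).re := by
  simpa [chi_one] using re_chi_mono le_rfl hx

lemma norm_chi_ofReal {x : ℝ} (hx : 1 ≤ x) : ‖chi x‖ = (chi x).re := by
  rw [← ofReal_re_chi, norm_real, Real.norm_of_nonneg (zero_le_one.trans (one_le_re_chi hx)),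
    ofReal_re]

lemma chi_eq_Gammaℝ_mul_riemannZeta {s : ℂ} (hs : 0 < s.re) (hs' : s ≠ 1) :
    chi s = s * (s - 1) * (Gammaℝ s * riemannZeta s) := by
  have hs₀ : s ≠ 0 := by rintro rfl; simp at hs
  have hs₁ : 1 - s ≠ 0 := sub_ne_zero.mpr hs'.symm
  rw [riemannZeta_def_of_ne_zero hs₀, mul_div_cancel₀ _ (Gammaℝ_ne_zero_of_re_pos hs),
    completedRiemannZeta_eq, chi]
  field_simp
  ring

lemma chi_ne_zero {s : ℂ} (hs : 1 ≤ s.re) : chi s ≠ 0 := by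
  rcases eq_or_ne s 1 with rfl | hs'
  · simp [chi_one]
  have hpos : 0 < s.re := zero_lt_one.trans_le hs
  have hs₀ : s ≠ 0 := by rintro rfl; simp at hpos
  rw [chi_eq_Gammaℝ_mul_riemannZeta hpos hs']
  exact mul_ne_zero (mul_ne_zero hs₀ (sub_ne_zero.mpr hs'))
    (mul_ne_zero (Gammaℝ_ne_zero_of_re_pos hpos) (riemannZeta_ne_zero_of_one_le_re hs))

lemma norm_chi_le (s : ℂ) :
    ‖chi s‖ ≤ ‖s‖ * ‖s - 1‖ * (completedRiemannZeta₀ s.re).re + 1 := by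
  refine (norm_add_le _ _).trans ?_
  rw [norm_mul, norm_mul, norm_one]
  gcongr
  exact norm_completedRiemannZeta₀_le s

/-! ### Growth of `chi` -/

section Growth

lemma norm_betaIntegral_le (u v : ℂ) :
    ‖betaIntegral u v‖ ≤ (betaIntegral u.re v.re).re := by
  have hnorm : betaIntegral u.re v.re =
      ((∫ x in (0 : ℝ)..1, ‖(x : ℂ) ^ (u - 1) * (1 - (x : ℂ)) ^ (v - 1)‖ : ℝ) : ℂ) := by
    rw [betaIntegral, ← intervalIntegral.integral_ofReal,
      intervalIntegral.integral_of_le zero_le_one, intervalIntegral.integral_of_le zero_le_one,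
      MeasureTheory.integral_Ioc_eq_integral_Ioo, MeasureTheory.integral_Ioc_eq_integral_Ioo]
    refine MeasureTheory.setIntegral_congr_fun measurableSet_Ioo fun x hx => ?_
    have hx' : 0 < 1 - x := sub_pos.mpr hx.2
    simp only [norm_mul, ← ofReal_one, ← ofReal_sub, norm_cpow_eq_rpow_re_of_pos hx.1,
      norm_cpow_eq_rpow_re_of_pos hx', sub_re, ofReal_re, ofReal_mul, ofReal_cpow hx.1.le,
      ofReal_cpow hx'.le]
  rw [hnorm, ofReal_re]
  exact intervalIntegral.norm_integral_le_integral_norm zero_le_one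

lemma Gamma_mul_norm_Gamma_half_le {x : ℝ} (hx : 1 / 2 < x) (y : ℝ) :
    Real.Gamma x * ‖Gamma (1 / 2 + y * I)‖ ≤ √Real.pi * ‖Gamma (x + y * I)‖ := by
  set u : ℂ := 1 / 2 + y * I with hu
  set v : ℝ := x - 1 / 2 with hv
  set b : ℝ := (betaIntegral (1 / 2 : ℝ) v).re with hb
  have hvpos : 0 < v := sub_pos.mpr hx
  have hΓv : 0 < Real.Gamma v := Real.Gamma_pos_of_pos hvpos
  have hbeta : ‖betaIntegral u v‖ ≤ b := by simpa [hu, hb] using norm_betaIntegral_le u v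
  have hcomplex : ‖Gamma u‖ * Real.Gamma v = ‖Gamma (x + y * I)‖ * ‖betaIntegral u v‖ := by
    have h := Gamma_mul_Gamma_eq_betaIntegral (s := u) (t := v) (by simp [hu]) (by simpa)
    rw [show u + v = x + y * I by rw [hu, hv]; push_cast; ring, Gamma_ofReal] at h
    simpa [abs_of_pos hΓv] using congrArg norm h
  have hreal : √Real.pi * Real.Gamma v = Real.Gamma x * b := by
    have h := Gamma_mul_Gamma_eq_betaIntegral (s := (1 / 2 : ℝ)) (t := v) (by simp) (by simpa)
    rw [← ofReal_add, show 1 / 2 + v = x by rw [hv]; ring] at h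
    simpa only [Gamma_ofReal, Real.Gamma_one_half_eq, re_ofReal_mul, ofReal_re] using
      congrArg re h
  refine le_of_mul_le_mul_right ?_ hΓv
  calc Real.Gamma x * ‖Gamma u‖ * Real.Gamma v
      = Real.Gamma x * (‖Gamma (x + y * I)‖ * ‖betaIntegral u v‖) := by rw [← hcomplex]; ring
    _ ≤ Real.Gamma x * (‖Gamma (x + y * I)‖ * b) := by
      have := Real.Gamma_pos_of_pos (show 0 < x by linarith)
      gcongr
    _ = √Real.pi * ‖Gamma (x + y * I)‖ * Real.Gamma v := by
      linear_combination (-‖Gamma (x + y * I)‖) * hreal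

lemma norm_Gamma_half_add_mul_I_sq (y : ℝ) :
    ‖Gamma (1 / 2 + y * I)‖ ^ 2 = Real.pi / Real.cosh (Real.pi * y) := by
  have hconj : (starRingEnd ℂ) (1 / 2 + y * I) = 1 - (1 / 2 + y * I) := by
    simp [map_ofNat (starRingEnd ℂ) 2]
    ring
  have hsin : sin (Real.pi * (1 / 2 + y * I)) = Real.cosh (Real.pi * y) := by
    rw [show (Real.pi : ℂ) * (1 / 2 + y * I) = (Real.pi * y : ℝ) * I + Real.pi / 2 by
      push_cast; ring, sin_add_pi_div_two, cos_mul_I, ofReal_cosh]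
  rw [← ofReal_inj, ofReal_pow, ← mul_conj', ← Gamma_conj, hconj, Gamma_mul_Gamma_one_sub, hsin,
    ofReal_div]

lemma Gamma_le_norm_mul_exp {x : ℝ} (hx : 1 / 2 < x) (y : ℝ) :
    Real.Gamma x ≤ ‖Gamma (x + y * I)‖ * Real.exp (Real.pi * |y|) := by
  have hπ : 0 < √Real.pi := Real.sqrt_pos.mpr Real.pi_pos
  have hhalf : √Real.pi ≤ ‖Gamma (1 / 2 + y * I)‖ * Real.exp (Real.pi * |y|) := by
    refine Real.sqrt_le_iff.mpr ⟨by positivity, ?_⟩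
    have hcosh : Real.cosh (Real.pi * y) ≤ Real.exp (Real.pi * |y|) ^ 2 := by
      have hπy : |Real.pi * y| = Real.pi * |y| := by rw [abs_mul, abs_of_pos Real.pi_pos]
      have hone : 1 ≤ Real.exp (Real.pi * |y|) := Real.one_le_exp (by positivity)
      rw [← Real.cosh_abs, hπy, Real.cosh_eq]
      have hneg : Real.exp (-(Real.pi * |y|)) ≤ 1 :=
        Real.exp_le_one_iff.mpr (neg_nonpos.mpr (by positivity))
      nlinarith
    rw [mul_pow, norm_Gamma_half_add_mul_I_sq, div_mul_eq_mul_div,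
      le_div_iff₀ (Real.cosh_pos _)]
    gcongr
  refine le_of_mul_le_mul_left ?_ hπ
  calc √Real.pi * Real.Gamma x
      ≤ Real.Gamma x * ‖Gamma (1 / 2 + y * I)‖ * Real.exp (Real.pi * |y|) := by
        rw [mul_comm, mul_assoc]
        exact mul_le_mul_of_nonneg_left hhalf (Real.Gamma_nonneg_of_nonneg (by linarith))
    _ ≤ √Real.pi * ‖Gamma (x + y * I)‖ * Real.exp (Real.pi * |y|) := by
        gcongr ?_ * _
        exact Gamma_mul_norm_Gamma_half_le hx y
    _ = _ := mul_assoc _ _ _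

lemma norm_LSeries_le {f : ℕ → ℂ} (hf : ∀ n, ‖f n‖ ≤ 1) {σ : ℝ} (hσ : 1 < σ) {s : ℂ}
    (hs : σ ≤ s.re) : ‖LSeries f s‖ ≤ ∑' n : ℕ, 1 / (n : ℝ) ^ σ := by
  refine tsum_of_norm_bounded (Real.summable_one_div_nat_rpow.mpr hσ).hasSum fun n => ?_
  rcases Nat.eq_zero_or_pos n with rfl | hn
  · rw [LSeries.term_zero, norm_zero]
    positivity
  rw [LSeries.norm_term_eq, if_neg hn.ne']
  have hn' : (1 : ℝ) ≤ n := by exact_mod_cast hn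
  gcongr
  exact hf n

lemma exists_norm_riemannZeta_bounds {σ : ℝ} (hσ : 1 < σ) :
    ∃ M : ℝ, ∀ s : ℂ, σ ≤ s.re → ‖riemannZeta s‖ ≤ M ∧ 1 ≤ M * ‖riemannZeta s‖ := by
  refine ⟨∑' n : ℕ, 1 / (n : ℝ) ^ σ, fun s hs => ?_⟩
  have hs' : 1 < s.re := hσ.trans_le hs
  have hzeta := norm_LSeries_le (f := fun n => ((ArithmeticFunction.zeta n : ℕ) : ℂ))
    (fun n => by rw [ArithmeticFunction.zeta_apply]; split_ifs <;> simp) hσ hs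
  have hmoebius := norm_LSeries_le (f := fun n => ((ArithmeticFunction.moebius n : ℤ) : ℂ))
    (fun n => by
      rw [norm_intCast]
      exact_mod_cast ArithmeticFunction.abs_moebius_le_one) hσ hs
  have hmul := congrArg norm (ArithmeticFunction.LSeries_zeta_mul_Lseries_moebius hs')
  rw [ArithmeticFunction.LSeries_zeta_eq_riemannZeta hs'] at hzeta hmul
  rw [norm_mul, norm_one] at hmul
  refine ⟨hzeta, hmul.ge.trans ?_⟩
  rw [mul_comm]
  gcongr

lemma norm_Gammaℝ (s : ℂ) : ‖Gammaℝ s‖ = Real.pi ^ (-s.re / 2) * ‖Gamma (s / 2)‖ := by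
  rw [Gammaℝ_def, norm_mul, norm_cpow_eq_rpow_re_of_pos Real.pi_pos]
  simp

lemma norm_Gammaℝ_re_le {s : ℂ} (hs : 1 < s.re) :
    ‖Gammaℝ s.re‖ ≤ ‖Gammaℝ s‖ * Real.exp (Real.pi * ‖s‖) := by
  have hΓ := Gamma_le_norm_mul_exp (x := s.re / 2) (by linarith) (s.im / 2)
  have him : |s.im / 2| ≤ ‖s‖ := by
    rw [abs_div, abs_two]
    linarith [abs_im_le_norm s, abs_nonneg s.im]
  have hs2 : ((s.re / 2 : ℝ) : ℂ) + (s.im / 2 : ℝ) * I = s / 2 := by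
    conv_rhs => rw [← re_add_im s]
    push_cast
    ring
  have hre : ‖Gamma ((s.re : ℂ) / 2)‖ = Real.Gamma (s.re / 2) := by
    rw [← ofReal_ofNat, ← ofReal_div, Gamma_ofReal, norm_real,
      Real.norm_of_nonneg (Real.Gamma_pos_of_pos (by linarith)).le]
  rw [norm_Gammaℝ, norm_Gammaℝ, ofReal_re, hre, mul_assoc]
  rw [hs2] at hΓ
  gcongr
  exact hΓ.trans (by gcongr)

lemma exists_re_chi_re_le {σ : ℝ} (hσ : 1 < σ) : ∃ M : ℝ, 0 ≤ M ∧ ∀ s : ℂ, σ ≤ s.re →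
    (chi s.re).re ≤ M * Real.exp (Real.pi * ‖s‖) * ‖chi s‖ := by
  obtain ⟨M, hM⟩ := exists_norm_riemannZeta_bounds hσ
  have hM₀ : 0 ≤ M := (norm_nonneg _).trans (hM σ (by simp)).1
  refine ⟨M * M, by positivity, fun s hs => ?_⟩
  have hs' : 1 < s.re := hσ.trans_le hs
  have hs₁ : s ≠ 1 := by rintro rfl; simp at hs'
  have hre₁ : (s.re : ℂ) ≠ 1 := by exact_mod_cast hs'.ne'
  have hnorm : ‖(s.re : ℂ)‖ ≤ ‖s‖ := by simpa using abs_re_le_norm s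
  have hnorm₁ : ‖(s.re : ℂ) - 1‖ ≤ ‖s - 1‖ := by
    simpa [← ofReal_one, ← ofReal_sub] using abs_re_le_norm (s - 1)
  have hζ := (hM s.re (by simpa)).1
  have hζ' := (hM s hs).2
  rw [← norm_chi_ofReal hs'.le, chi_eq_Gammaℝ_mul_riemannZeta (by rw [ofReal_re]; linarith) hre₁,
    chi_eq_Gammaℝ_mul_riemannZeta (by linarith) hs₁]
  simp only [norm_mul]
  calc ‖(s.re : ℂ)‖ * ‖(s.re : ℂ) - 1‖ * (‖Gammaℝ s.re‖ * ‖riemannZeta s.re‖)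
      ≤ ‖s‖ * ‖s - 1‖ * ((‖Gammaℝ s‖ * Real.exp (Real.pi * ‖s‖)) * (M * 1)) := by
        rw [mul_one]
        gcongr
        exact norm_Gammaℝ_re_le hs'
    _ ≤ ‖s‖ * ‖s - 1‖ * ((‖Gammaℝ s‖ * Real.exp (Real.pi * ‖s‖)) *
        (M * (M * ‖riemannZeta s‖))) := by gcongr
    _ = _ := by ring

lemma norm_chi_sub_le {δ : ℝ} (hδ : 0 ≤ δ) {s : ℂ} (hs : 1 < s.re) (hs' : (1 + δ) / 2 ≤ s.re) :
    ‖chi (s - δ)‖ ≤ (‖s - δ‖ * ‖s - δ - 1‖ / (s.re * (s.re - 1)) + 1) * (chi s.re).re := by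
  have hpos : 0 < s.re * (s.re - 1) := mul_pos (by linarith) (by linarith)
  have hmono : (completedRiemannZeta₀ (s - δ).re).re ≤ (completedRiemannZeta₀ s.re).re := by
    refine re_completedRiemannZeta₀_mono ?_
    rw [sub_re, ofReal_re, abs_of_nonneg (a := s.re - 1 / 2) (by linarith), abs_le]
    constructor <;> linarith
  have hnonneg := re_completedRiemannZeta₀_nonneg s.re
  rw [re_chi_ofReal]
  calc ‖chi (s - δ)‖ ≤ ‖s - δ‖ * ‖s - δ - 1‖ * (completedRiemannZeta₀ s.re).re + 1 :=
        (norm_chi_le _).trans (by gcongr)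
    _ ≤ ‖s - δ‖ * ‖s - δ - 1‖ * (completedRiemannZeta₀ s.re).re + 1 +
        (‖s - δ‖ * ‖s - δ - 1‖ / (s.re * (s.re - 1)) +
          s.re * (s.re - 1) * (completedRiemannZeta₀ s.re).re) := by
        have : 0 ≤ ‖s - δ‖ * ‖s - δ - 1‖ / (s.re * (s.re - 1)) := by positivity
        have := mul_nonneg hpos.le hnonneg
        linarith
    _ = _ := by linear_combination -(‖s - δ‖ * ‖s - δ - 1‖ * (completedRiemannZeta₀ s.re).re) *
        div_self hpos.ne'

end Growth

/-! ### Shifts of `chi` to the left -/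

section Shift

open Filter Topology

lemma exists_norm_chi_sub_le_mul_exp {δ : ℝ} (hδ : 1 < δ) :
    ∃ C : ℝ, ∀ z : ℂ, 0 ≤ z.re → ‖chi (z + ((1 + δ) / 2 : ℝ) - δ)‖ ≤
      C * Real.exp ((2 + Real.pi) * ‖z‖) * ‖chi (z + ((1 + δ) / 2 : ℝ))‖ := by
  set σ : ℝ := (1 + δ) / 2 with hσ
  have hσ₁ : 1 < σ := by linarith
  obtain ⟨M, hM₀, hM⟩ := exists_re_chi_re_le hσ₁
  set p : ℝ := σ * (σ - 1)
  have : 0 < p := mul_pos (by linarith) (by linarith)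
  refine ⟨(2 * δ * (2 * δ) / p + 1) * (M * Real.exp (Real.pi * δ)), fun z hz => ?_⟩
  set s : ℂ := z + σ with hs
  have hsre : σ ≤ s.re := by simpa [hs]
  have hlin : ‖z‖ + 2 * δ ≤ 2 * δ * Real.exp ‖z‖ := by
    nlinarith [Real.add_one_le_exp ‖z‖, norm_nonneg z]
  have hs₀ : ‖s‖ ≤ ‖z‖ + δ :=
    (norm_add_le z σ).trans <| by
      rw [norm_real, Real.norm_of_nonneg (by linarith)]
      linarith
  have hs₁ : ‖s - δ‖ ≤ ‖z‖ + 2 * δ := by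
    have h := norm_sub_le s δ
    rw [norm_real, Real.norm_of_nonneg (by linarith)] at h
    linarith
  have hs₂ : ‖s - δ - 1‖ ≤ ‖z‖ + 2 * δ := by
    rw [show s - δ - 1 = z - ((1 + δ) / 2 : ℝ) by rw [hs, hσ]; push_cast; ring]
    refine (norm_sub_le _ _).trans ?_
    rw [norm_real, Real.norm_of_nonneg (by linarith)]
    linarith
  have hpre : p ≤ s.re * (s.re - 1) := mul_le_mul hsre (by linarith) (by linarith) (by linarith)
  have hsq : 1 ≤ Real.exp ‖z‖ ^ 2 := one_le_pow₀ (Real.one_le_exp (norm_nonneg z))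
  have hχ : 0 ≤ (chi s.re).re := zero_le_one.trans (one_le_re_chi (by linarith))
  calc ‖chi (s - δ)‖
      ≤ (‖s - δ‖ * ‖s - δ - 1‖ / (s.re * (s.re - 1)) + 1) * (chi s.re).re :=
        norm_chi_sub_le (by linarith) (by linarith) hsre
    _ ≤ ((2 * δ * Real.exp ‖z‖) * (2 * δ * Real.exp ‖z‖) / p + Real.exp ‖z‖ ^ 2) *
        (M * Real.exp (Real.pi * (‖z‖ + δ)) * ‖chi s‖) := by
        gcongr
        · exact hs₁.trans hlin
        · exact hs₂.trans hlin
        · exact (hM s hsre).trans (by gcongr)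
    _ = _ := by
        rw [add_mul 2 Real.pi, Real.exp_add, two_mul ‖z‖, Real.exp_add ‖z‖, mul_add, Real.exp_add]
        ring

lemma norm_chi_sub_le_norm_chi {δ : ℝ} (hδ : 1 < δ) {w : ℂ} (hw : (1 + δ) / 2 ≤ w.re) :
    ‖chi (w - δ)‖ ≤ ‖chi w‖ := by
  set σ : ℝ := (1 + δ) / 2 with hσ
  have hne {z : ℂ} (hz : 0 ≤ z.re) : chi (z + σ) ≠ 0 :=
    chi_ne_zero (by rw [add_re, ofReal_re]; linarith)
  suffices key : ∀ z : ℂ, 0 ≤ z.re → ‖chi (z + σ - δ) / chi (z + σ)‖ ≤ 1 by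
    have h := key (w - σ) (by simpa using hw)
    rwa [sub_add_cancel, norm_div,
      div_le_one (norm_pos_iff.mpr (chi_ne_zero (by linarith)))] at h
  intro z hz
  have hχ := differentiable_chi
  refine PhragmenLindelof.right_half_plane_of_bounded_on_real
    (f := fun z => chi (z + σ - δ) / chi (z + σ)) ?_ ?_ ?_ ?_ hz
  · refine DifferentiableOn.diffContOnCl fun z hz => ?_
    rw [closure_setOfPred_lt_re] at hz
    exact ((by fun_prop : DifferentiableAt ℂ (fun z => chi (z + σ - δ)) z).div
      (by fun_prop) (hne hz)).differentiableWithinAt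
  · obtain ⟨C, hC⟩ := exists_norm_chi_sub_le_mul_exp hδ
    refine ⟨1, one_lt_two, 2 + Real.pi, Asymptotics.IsBigO.of_bound C ?_⟩
    filter_upwards [mem_inf_of_right (mem_principal_self _)] with z hz
    have hz₀ : 0 ≤ z.re := le_of_lt hz
    rw [norm_div, div_le_iff₀ (norm_pos_iff.mpr (hne hz₀)), Real.rpow_one,
      Real.norm_of_nonneg (Real.exp_nonneg _)]
    exact hC z hz₀
  · refine ⟨1, ?_⟩
    rw [eventually_map]
    filter_upwards [eventually_ge_atTop (1 + δ)] with x hx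
    have hmono := re_chi_mono (x := x + σ - δ) (y := x + σ) (by linarith) (by linarith)
    rw [← ofReal_add, ← ofReal_sub, norm_div, norm_chi_ofReal (by linarith),
      norm_chi_ofReal (by linarith)]
    exact div_le_one_of_le₀ hmono (by linarith [one_le_re_chi (x := x + σ) (by linarith)])
  · intro y
    have hreflect : chi (y * I + σ - δ) = (starRingEnd ℂ) (chi (y * I + σ)) := by
      rw [← chi_conj, ← chi_one_sub]
      congr 1
      simp only [hσ, map_add, map_mul, conj_ofReal, conj_I]
      push_cast
      ring
    simp only [hreflect, norm_div, RCLike.norm_conj]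
    exact div_self_le_one _

lemma norm_chi_sub_one_le {w : ℂ} (hw : 1 ≤ w.re) : ‖chi (w - 1)‖ ≤ ‖chi w‖ := by
  have hcont : Continuous fun δ : ℝ => ‖chi (w + (δ - 1))‖ := by
    have := differentiable_chi.continuous
    fun_prop
  have hlim := (hcont.tendsto 1).mono_left (nhdsWithin_le_nhds (s := Set.Ioi 1))
  rw [ofReal_one, sub_self, add_zero] at hlim
  refine ge_of_tendsto hlim ?_
  filter_upwards [self_mem_nhdsWithin] with δ (hδ : 1 < δ)
  have h := norm_chi_sub_le_norm_chi hδ (w := w + (δ - 1))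
    (by simp only [add_re, sub_re, ofReal_re, one_re]; linarith)
  rwa [show w + (δ - 1) - δ = w - 1 by ring] at h

lemma norm_chi_sub_two_le {w : ℂ} (hw : 3 / 2 ≤ w.re) : ‖chi (w - 2)‖ ≤ ‖chi w‖ := by
  simpa using norm_chi_sub_le_norm_chi one_lt_two (w := w) (by linarith)

end Shift

/-! ### The Schwarz–Pick lemma on the right half-plane -/

section SchwarzPick

lemma one_sub_mul_ne_zero {β : ℝ} (hβ : |β| < 1) {z : ℂ} (hz : ‖z‖ ≤ 1) : 1 - β * z ≠ 0 := by
  refine sub_ne_zero.mpr fun h => ?_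
  have hnorm : ‖(β : ℂ) * z‖ < 1 := by
    rw [norm_mul, norm_real, Real.norm_eq_abs]
    exact (mul_le_of_le_one_right (abs_nonneg β) hz).trans_lt hβ
  simp [← h] at hnorm

lemma one_add_mul_ne_zero {β : ℝ} (hβ : |β| < 1) {z : ℂ} (hz : ‖z‖ ≤ 1) : 1 + β * z ≠ 0 := by
  simpa using one_sub_mul_ne_zero hβ (z := -z) (by rwa [norm_neg])

lemma norm_sub_div_one_sub_mul_le {β : ℝ} (hβ : |β| < 1) {z : ℂ} (hz : ‖z‖ ≤ 1) :
    ‖(z - β) / (1 - β * z)‖ ≤ 1 := by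
  rw [norm_div]
  refine div_le_one_of_le₀ (le_of_sq_le_sq ?_ (norm_nonneg _)) (norm_nonneg _)
  have hβ' : β ^ 2 < 1 := (sq_lt_one_iff_abs_lt_one β).mpr hβ
  have hz' : normSq z ≤ 1 := by rw [normSq_eq_norm_sq]; exact pow_le_one₀ (norm_nonneg z) hz
  have hdiff : normSq (1 - β * z) - normSq (z - β) = (1 - β ^ 2) * (1 - normSq z) := by
    simp only [normSq_apply, sub_re, sub_im, one_re, one_im, re_ofReal_mul, im_ofReal_mul,
      ofReal_re, ofReal_im]
    ring
  rw [← normSq_eq_norm_sq, ← normSq_eq_norm_sq]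
  nlinarith

/-- The conformal map of the right half-plane onto the unit disc that sends `p` to the origin. -/
noncomputable def cayley (p : ℝ) (w : ℂ) : ℂ := (w - p) / (w + p)

variable {p : ℝ}

lemma add_ofReal_ne_zero (hp : 0 < p) {w : ℂ} (hw : 0 ≤ w.re) : w + p ≠ 0 := fun h => by
  have := congrArg re h
  simp only [add_re, ofReal_re, zero_re] at this
  linarith

lemma norm_cayley_lt_one (hp : 0 < p) {w : ℂ} (hw : 0 < w.re) : ‖cayley p w‖ < 1 := by
  rw [cayley, norm_div, div_lt_one (norm_pos_iff.mpr (add_ofReal_ne_zero hp hw.le))]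
  refine lt_of_pow_lt_pow_left₀ 2 (norm_nonneg _) ?_
  simp only [← normSq_eq_norm_sq, normSq_apply, sub_re, sub_im, add_re, add_im, ofReal_re,
    ofReal_im]
  nlinarith

lemma differentiableAt_cayley (hp : 0 < p) {w : ℂ} (hw : 0 < w.re) :
    DifferentiableAt ℂ (cayley p) w := by
  have := add_ofReal_ne_zero hp hw.le
  unfold cayley
  fun_prop (disch := assumption)

/-- The inverse of the conformal map `cayley p`. -/
noncomputable def cayleySymm (p : ℝ) (u : ℂ) : ℂ := p * ((1 + u) / (1 - u))

lemma one_sub_ne_zero_of_norm_lt_one {u : ℂ} (hu : ‖u‖ < 1) : 1 - u ≠ 0 :=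
  sub_ne_zero.mpr fun h => by simp [← h] at hu

lemma re_cayleySymm_pos (hp : 0 < p) {u : ℂ} (hu : ‖u‖ < 1) : 0 < (cayleySymm p u).re := by
  have hden := normSq_pos.mpr (one_sub_ne_zero_of_norm_lt_one hu)
  have hre : ((1 + u) / (1 - u)).re = (1 - normSq u) / normSq (1 - u) := by
    rw [div_re, normSq_apply u]
    simp only [add_re, add_im, sub_re, sub_im, one_re, one_im]
    ring
  have hnum : normSq u < 1 := by
    rw [normSq_eq_norm_sq]
    exact pow_lt_one₀ (norm_nonneg u) hu two_ne_zero
  rw [cayleySymm, re_ofReal_mul, hre]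
  exact mul_pos hp (div_pos (sub_pos.mpr hnum) hden)

lemma differentiableAt_cayleySymm {u : ℂ} (hu : ‖u‖ < 1) :
    DifferentiableAt ℂ (cayleySymm p) u := by
  have := one_sub_ne_zero_of_norm_lt_one hu
  unfold cayleySymm
  fun_prop (disch := assumption)

lemma cayleySymm_cayley (hp : 0 < p) {w : ℂ} (hw : 0 < w.re) :
    cayleySymm p (cayley p w) = w := by
  have hden := add_ofReal_ne_zero hp hw.le
  have hp' : (p : ℂ) ≠ 0 := ofReal_ne_zero.mpr hp.ne'
  have hsub : 1 - cayley p w = 2 * p / (w + p) := by rw [cayley]; field_simp; ring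
  have hadd : 1 + cayley p w = 2 * w / (w + p) := by rw [cayley]; field_simp; ring
  rw [cayleySymm, hsub, hadd]
  field_simp

lemma exists_eq_cayley_mul (hp : 0 < p) {K : ℂ → ℂ}
    (hdiff : ∀ w : ℂ, 0 < w.re → DifferentiableAt ℂ K w) (hK : ∀ w : ℂ, 0 < w.re → ‖K w‖ ≤ 1)
    (hzero : K p = 0) : ∃ G : ℂ → ℂ, (∀ w : ℂ, 0 < w.re → DifferentiableAt ℂ G w) ∧
      (∀ w : ℂ, 0 < w.re → ‖G w‖ ≤ 1) ∧ ∀ w : ℂ, 0 < w.re → K w = cayley p w * G w := by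
  set T : ℂ → ℂ := K ∘ cayleySymm p with hT
  have hT₀ : T 0 = 0 := by simp [hT, cayleySymm, hzero]
  have hTdiff : DifferentiableOn ℂ T (Metric.ball 0 1) := fun u hu => by
    rw [mem_ball_zero_iff] at hu
    exact ((hdiff _ (re_cayleySymm_pos hp hu)).comp u
      (differentiableAt_cayleySymm hu)).differentiableWithinAt
  have hTmaps : Set.MapsTo T (Metric.ball 0 1) (Metric.closedBall (T 0) 1) := fun u hu => by
    rw [mem_ball_zero_iff] at hu
    rw [hT₀, mem_closedBall_zero_iff]
    exact hK _ (re_cayleySymm_pos hp hu)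
  have hmem {w : ℂ} (hw : 0 < w.re) : cayley p w ∈ Metric.ball (0 : ℂ) 1 :=
    mem_ball_zero_iff.mpr (norm_cayley_lt_one hp hw)
  refine ⟨dslope T 0 ∘ cayley p, fun w hw => ?_, fun w hw => ?_, fun w hw => ?_⟩
  · have hslope := (differentiableOn_dslope (Metric.ball_mem_nhds 0 one_pos)).mpr hTdiff
    exact (hslope.differentiableAt (Metric.isOpen_ball.mem_nhds (hmem hw))).comp w
      (differentiableAt_cayley hp hw)
  · simpa using norm_dslope_le_div_of_mapsTo_ball hTdiff hTmaps (hmem hw)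
  · have h := sub_smul_dslope T 0 (cayley p w)
    rw [sub_zero, hT₀, sub_zero, smul_eq_mul, hT, Function.comp_apply,
      cayleySymm_cayley hp hw] at h
    exact h.symm

/-- The automorphism `u ↦ (β + u) / (1 + β u)` of the unit disc, for real `|β| < 1`. -/
noncomputable def mobius (β : ℝ) (u : ℂ) : ℂ := (β + u) / (1 + β * u)

lemma exists_schwarz_pick (hp : 0 < p) {H : ℂ → ℂ}
    (hdiff : ∀ w : ℂ, 0 < w.re → DifferentiableAt ℂ H w) (hH : ∀ w : ℂ, 0 < w.re → ‖H w‖ ≤ 1)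
    {β : ℝ} (hβ : |β| < 1) (hp_eq : H p = β) :
    ∃ G : ℂ → ℂ, (∀ w : ℂ, 0 < w.re → DifferentiableAt ℂ G w) ∧
      (∀ w : ℂ, 0 < w.re → ‖G w‖ ≤ 1) ∧
      ∀ w : ℂ, 0 < w.re → H w = mobius β (cayley p w * G w) := by
  obtain ⟨G, hGdiff, hG, hGK⟩ := exists_eq_cayley_mul hp
    (K := fun w => (H w - β) / (1 - β * H w))
    (fun w hw => ((hdiff w hw).sub_const _).div (((hdiff w hw).const_mul _).const_sub _)
      (one_sub_mul_ne_zero hβ (hH w hw)))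
    (fun w hw => norm_sub_div_one_sub_mul_le hβ (hH w hw)) (by simp [hp_eq])
  refine ⟨G, hGdiff, hG, fun w hw => ?_⟩
  have h := (div_eq_iff (one_sub_mul_ne_zero hβ (hH w hw))).mp (hGK w hw)
  rw [mobius, eq_div_iff (one_add_mul_ne_zero hβ ?_)]
  · linear_combination h
  · rw [norm_mul]
    exact mul_le_one₀ (norm_cayley_lt_one hp hw).le (norm_nonneg _) (hG w hw)

end SchwarzPick

/-! ### Disc arithmetic -/

section Forcing

variable {α : Type}

/-- `k n`, arranged so that the kernel evaluates `n` to a numeral before it enters `k`. -/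
def withNat (n : ℕ) (k : ℕ → α) : α := Nat.casesOn n (k 0) fun m => k m.succ

/-- `k n`, arranged so that the kernel evaluates `n` to a numeral before it enters `k`. -/
def withInt (n : ℤ) (k : ℤ → α) : α :=
  Int.casesOn n (fun m => withNat m fun m => k (.ofNat m))
    fun m => withNat m fun m => k (.negSucc m)

lemma withNat_eq (n : ℕ) (k : ℕ → α) : withNat n k = k n := by cases n <;> rfl

lemma withInt_eq (n : ℤ) (k : ℤ → α) : withInt n k = k n := by
  cases n <;> simp only [withInt, withNat_eq]

end Forcing

/-- The common denominator of the centres and radii of discs. -/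
def scale : ℕ := 10 ^ 30

/-- Sets of complex numbers for rigorous numerics: `mk re im rad` is the closed disc with centre
`(re + im * I) / scale` and radius `rad / scale`, and `plane` is all of `ℂ`, the value of an
inverse about which nothing is known. -/
inductive Disc
  | plane
  | mk (re im : ℤ) (rad : ℕ)

namespace Disc

/-- The disc `mk re im rad` with its parameters evaluated. -/
def make (re im : ℤ) (rad : ℕ) : Disc :=
  withInt re fun re => withInt im fun im => withNat rad fun rad => mk re im rad

/-- The complex numbers represented by a disc. -/
protected def Mem : Disc → ℂ → Prop
  | plane, _ => True
  | mk x y r, z => ‖scale * z - (x + y * I)‖ ≤ r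

instance : Membership ℂ Disc := ⟨Disc.Mem⟩

/-- One Newton step for `√n`, rounded up: by AM–GM, the result is an upper bound for `√n` whatever
the guess `g > 0` was. -/
def sqrtStep (n g : ℕ) : ℕ := (g + n / g) / 2 + 1

/-- An upper bound for the norm of `x + y * I`. -/
def normBound (x y : ℤ) : ℕ :=
  let n := (x * x + y * y).natAbs
  sqrtStep n (sqrtStep n (x.natAbs + y.natAbs + 1))

/-- The disc of radius `0` around a natural number. -/
def nat (n : ℕ) : Disc := make (scale * n) 0 0

instance (n : ℕ) : OfNat Disc n := ⟨nat n⟩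

instance : Add Disc where
  add
    | mk x y r, mk x' y' r' => make (x + x') (y + y') (r + r')
    | _, _ => plane

instance : Sub Disc where
  sub
    | mk x y r, mk x' y' r' => make (x - x') (y - y') (r + r')
    | _, _ => plane

instance : Mul Disc where
  mul
    | mk x y r, mk x' y' r' =>
      make ((x * x' - y * y') / scale) ((x * y' + y * x') / scale)
        ((normBound x y * r' + r * (normBound x' y' + r')) / scale + 3)
    | _, _ => plane

instance : Inv Disc where
  inv
    | mk x y r =>
      let d := x * x + y * y - r * r
      if 0 < d then
        make (x * (scale * scale) / d) (-y * (scale * scale) / d)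
          (r * (scale * scale) / d.natAbs + 3)
      else plane
    | plane => plane

/-- The complex conjugate of a disc. -/
def conj : Disc → Disc
  | mk x y r => make x (-y) r
  | plane => plane

/-- The closed unit disc. -/
def unit : Disc := make 0 0 scale

/-- The smallest representable disc centred at `0` known to contain a given disc. -/
def centered : Disc → Disc
  | mk x y r => make 0 0 (normBound x y + r)
  | plane => plane

/-- Whether a disc lies in the open right half-plane. -/
def isPos : Disc → Bool
  | mk x _ r => decide ((r : ℤ) < x)
  | plane => false

variable {D E : Disc} {z w : ℂ}

lemma mem_mk {x y : ℤ} {r : ℕ} : z ∈ mk x y r ↔ ‖scale * z - (x + y * I)‖ ≤ r := Iff.rfl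

lemma mem_make {x y : ℤ} {r : ℕ} : z ∈ make x y r ↔ ‖scale * z - (x + y * I)‖ ≤ r := by
  simp only [make, withInt_eq, withNat_eq, mem_mk]

lemma mem_plane : z ∈ plane := trivial

lemma scale_pos : (0 : ℝ) < scale := by norm_num [scale]

lemma scale_ne_zero : (scale : ℂ) ≠ 0 := by norm_num [scale]

lemma sqrt_le_sqrtStep (n : ℕ) {g : ℕ} (hg : 0 < g) : √(n : ℝ) ≤ sqrtStep n g := by
  have hg' : (0 : ℝ) < g := by exact_mod_cast hg
  have amgm : √(n : ℝ) ≤ (g + n / g) / 2 := by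
    rw [Real.sqrt_le_left (by positivity)]
    have h := four_mul_le_pow_two_add (g : ℝ) (n / g)
    rw [mul_assoc, mul_div_cancel₀ _ hg'.ne'] at h
    linarith
  have hdiv : (n : ℝ) / g ≤ (n / g : ℕ) + 1 := by
    rw [div_le_iff₀ hg']
    exact_mod_cast (Nat.lt_mul_of_div_lt (Nat.lt_succ_self _) hg).le
  have hhalf : ((g + n / g : ℕ) : ℝ) ≤ 2 * ((g + n / g) / 2 : ℕ) + 1 := by
    exact_mod_cast (by omega : g + n / g ≤ 2 * ((g + n / g) / 2) + 1)
  rw [sqrtStep]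
  push_cast at hhalf ⊢
  linarith

lemma norm_le_normBound (x y : ℤ) : ‖(x + y * I : ℂ)‖ ≤ normBound x y := by
  have hnorm : ‖(x + y * I : ℂ)‖ = √((x * x + y * y).natAbs : ℕ) := by
    rw [Nat.cast_natAbs, abs_of_nonneg (add_nonneg (mul_self_nonneg x) (mul_self_nonneg y))]
    have h := norm_add_mul_I (x : ℝ) y
    push_cast at h ⊢
    rw [h, sq, sq]
  rw [hnorm]
  exact sqrt_le_sqrtStep _ (Nat.succ_pos _)

lemma norm_div_sub_ediv_le (a b : ℤ) {d : ℤ} (hd : 0 < d) :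
    ‖((a + b * I) / d : ℂ) - ((a / d : ℤ) + (b / d : ℤ) * I)‖ ≤ 2 := by
  have hd' : (0 : ℝ) < d := by exact_mod_cast hd
  have hfrac (c : ℤ) : ‖(c / d - (c / d : ℤ) : ℂ)‖ ≤ 1 := by
    have hmod : (c / d - (c / d : ℤ) : ℂ) = ((c % d : ℤ) / d : ℝ) := by
      have h : (d : ℂ) * (c / d : ℤ) + (c % d : ℤ) = c := by
        exact_mod_cast Int.mul_ediv_add_emod c d
      have : (d : ℂ) ≠ 0 := by exact_mod_cast hd.ne'
      push_cast
      field_simp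
      linear_combination -h
    rw [hmod, norm_real, Real.norm_of_nonneg (div_nonneg (by
      exact_mod_cast Int.emod_nonneg c hd.ne') hd'.le), div_le_one hd']
    exact_mod_cast (Int.emod_lt_of_pos c hd).le
  calc ‖((a + b * I) / d : ℂ) - ((a / d : ℤ) + (b / d : ℤ) * I)‖
      = ‖(a / d - (a / d : ℤ) : ℂ) + (b / d - (b / d : ℤ) : ℂ) * I‖ := by ring_nf
    _ ≤ ‖(a / d - (a / d : ℤ) : ℂ)‖ + ‖(b / d - (b / d : ℤ) : ℂ) * I‖ := norm_add_le _ _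
    _ ≤ 1 + 1 := by
        rw [norm_mul, norm_I, mul_one]
        exact add_le_add (hfrac a) (hfrac b)
    _ = 2 := by norm_num

lemma mem_make_ediv {a b d : ℤ} (hd : 0 < d) {e : ℕ}
    (h : ‖scale * z - (a + b * I) / d‖ ≤ e / d) :
    z ∈ make (a / d) (b / d) (e / d.natAbs + 3) := by
  have hd' : (0 : ℝ) < d := by exact_mod_cast hd
  have hnat : ((d.natAbs : ℕ) : ℝ) = d := by
    rw [Nat.cast_natAbs, abs_of_pos hd]
  have hfloor : (e : ℝ) / d ≤ (e / d.natAbs : ℕ) + 1 := by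
    rw [div_le_iff₀ hd', ← hnat]
    exact_mod_cast (Nat.lt_mul_of_div_lt (Nat.lt_succ_self _) (Int.natAbs_pos.mpr hd.ne')).le
  rw [mem_make]
  push_cast
  linarith [norm_sub_le_norm_sub_add_norm_sub (scale * z : ℂ) ((a + b * I) / d)
    ((a / d : ℤ) + (b / d : ℤ) * I), norm_div_sub_ediv_le a b hd]

lemma mem_nat (n : ℕ) : (n : ℂ) ∈ nat n := by
  rw [nat, mem_make]
  simp

lemma mem_one : (1 : ℂ) ∈ (1 : Disc) := Nat.cast_one (R := ℂ) ▸ mem_nat 1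

lemma mem_ofNat (n : ℕ) [n.AtLeastTwo] : (OfNat.ofNat n : ℂ) ∈ (OfNat.ofNat n : Disc) :=
  mem_nat n

lemma mem_add (hz : z ∈ D) (hw : w ∈ E) : z + w ∈ D + E := by
  match D, E with
  | plane, _ | mk _ _ _, plane => exact mem_plane
  | mk x y r, mk x' y' r' =>
    rw [mem_mk] at hz hw
    refine mem_make.mpr ?_
    push_cast
    refine (le_of_eq ?_).trans ((norm_add_le _ _).trans (add_le_add hz hw))
    congr 1
    ring

lemma mem_sub (hz : z ∈ D) (hw : w ∈ E) : z - w ∈ D - E := by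
  match D, E with
  | plane, _ | mk _ _ _, plane => exact mem_plane
  | mk x y r, mk x' y' r' =>
    rw [mem_mk] at hz hw
    refine mem_make.mpr ?_
    push_cast
    refine (le_of_eq ?_).trans ((norm_sub_le _ _).trans (add_le_add hz hw))
    congr 1
    ring

lemma norm_mul_sub_mul_le {a b c d : ℂ} {r s M N : ℝ} (hac : ‖a - c‖ ≤ r) (hbd : ‖b - d‖ ≤ s)
    (hc : ‖c‖ ≤ M) (hd : ‖d‖ ≤ N) : ‖a * b - c * d‖ ≤ M * s + r * (N + s) := by
  have hb : ‖b‖ ≤ N + s := by linarith [norm_le_norm_add_norm_sub' b d]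
  calc ‖a * b - c * d‖ = ‖c * (b - d) + (a - c) * b‖ := by ring_nf
    _ ≤ ‖c * (b - d)‖ + ‖(a - c) * b‖ := norm_add_le _ _
    _ ≤ M * s + r * (N + s) := by
        rw [norm_mul, norm_mul]
        gcongr
        · exact (norm_nonneg _).trans hc
        · exact (norm_nonneg _).trans hac

lemma mem_mul (hz : z ∈ D) (hw : w ∈ E) : z * w ∈ D * E := by
  match D, E with
  | plane, _ | mk _ _ _, plane => exact mem_plane
  | mk x y r, mk x' y' r' =>
    rw [mem_mk] at hz hw
    refine mem_make_ediv (d := scale) (by norm_num [scale]) ?_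
    have h := norm_mul_sub_mul_le hz hw (norm_le_normBound x y) (norm_le_normBound x' y')
    have hscale : (scale * (z * w) - ((x * x' - y * y' : ℤ) + (x * y' + y * x' : ℤ) * I) /
        (scale : ℤ) : ℂ) =
        (scale * z * (scale * w) - (x + y * I) * (x' + y' * I)) / scale := by
      have := scale_ne_zero
      push_cast
      field_simp
      linear_combination (y * y' : ℂ) * I_sq
    rw [hscale, norm_div, Complex.norm_natCast, Int.cast_natCast]
    push_cast
    gcongr

lemma norm_inv_sub_conj_div_le {u c : ℂ} {r : ℝ} (hu : ‖u - c‖ ≤ r) (hd : 0 < normSq c - r ^ 2) :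
    ‖u⁻¹ - (starRingEnd ℂ) c / (normSq c - r ^ 2 : ℝ)‖ ≤ r / (normSq c - r ^ 2) := by
  set d := normSq c - r ^ 2 with hd_eq
  have hr : 0 ≤ r := (norm_nonneg _).trans hu
  have hu₀ : u ≠ 0 := by
    rintro rfl
    rw [zero_sub, norm_neg] at hu
    have := normSq_eq_norm_sq c
    nlinarith [norm_nonneg c]
  have hd₀ : (d : ℂ) ≠ 0 := ofReal_ne_zero.mpr hd.ne'
  have hsq : ‖d - (starRingEnd ℂ) c * u‖ ^ 2 ≤ (r * ‖u‖) ^ 2 := by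
    have hdist : normSq (u - c) ≤ r ^ 2 := by
      rw [normSq_eq_norm_sq]
      gcongr
    have hexpand : normSq (d - (starRingEnd ℂ) c * u) =
        r ^ 2 * normSq u + d * (normSq (u - c) - r ^ 2) := by
      rw [hd_eq]
      simp only [normSq_apply, sub_re, sub_im, mul_re, mul_im, conj_re, conj_im, ofReal_re,
        ofReal_im]
      ring
    rw [mul_pow, ← normSq_eq_norm_sq, ← normSq_eq_norm_sq, hexpand]
    nlinarith
  have hle := abs_le_of_sq_le_sq' hsq (by positivity)
  have heq : u⁻¹ - (starRingEnd ℂ) c / d = (d - (starRingEnd ℂ) c * u) / (d * u) := by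
    field_simp
  rw [heq, norm_div, norm_mul, norm_real, Real.norm_of_nonneg hd.le,
    div_le_div_iff₀ (by positivity) hd]
  nlinarith [hle.2]

lemma mem_inv (hz : z ∈ D) : z⁻¹ ∈ D⁻¹ := by
  match D with
  | plane => exact mem_plane
  | mk x y r =>
    change _ ∈ ite _ _ _
    split_ifs with hd
    · rw [mem_mk] at hz
      refine mem_make_ediv hd ?_
      have hreal : normSq (x + y * I) - (r : ℝ) ^ 2 = (x * x + y * y - r * r : ℤ) := by
        rw [← ofReal_intCast, ← ofReal_intCast, normSq_add_mul_I]
        push_cast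
        ring
      have h := norm_inv_sub_conj_div_le hz (by rw [hreal]; exact_mod_cast hd)
      rw [hreal] at h
      have hscale : (scale * z⁻¹ - ((x * (scale * scale) : ℤ) + (-y * (scale * scale) : ℤ) * I) /
          (x * x + y * y - r * r : ℤ) : ℂ) = scale * scale * ((scale * z)⁻¹ -
            (starRingEnd ℂ) (x + y * I) / ((x * x + y * y - r * r : ℤ) : ℝ)) := by
        have := scale_ne_zero
        simp only [map_add, map_mul, map_intCast, conj_I, mul_inv]
        push_cast
        field_simp
      rw [hscale, norm_mul, norm_mul, Complex.norm_natCast, Nat.cast_mul, Nat.cast_mul, mul_comm,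
        mul_div_right_comm]
      gcongr
    · exact mem_plane

lemma mem_conj (hz : z ∈ D) : (starRingEnd ℂ) z ∈ conj D := by
  match D with
  | plane => exact mem_plane
  | mk x y r =>
    rw [mem_mk] at hz
    refine mem_make.mpr ?_
    rw [← norm_conj] at hz
    simpa [sub_eq_add_neg] using hz

lemma mem_unit (hz : ‖z‖ ≤ 1) : z ∈ unit := by
  refine mem_make.mpr ?_
  simpa using mul_le_of_le_one_right scale_pos.le hz

lemma mem_centered (hz : z ∈ D) (hw : ‖w‖ ≤ ‖z‖) : w ∈ centered D := by
  match D with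
  | plane => exact mem_plane
  | mk x y r =>
    rw [mem_mk] at hz
    refine mem_make.mpr ?_
    have hscale : ‖scale * w‖ ≤ ‖scale * z‖ := by
      rw [norm_mul, norm_mul]
      gcongr
    push_cast
    simp only [zero_mul, add_zero, sub_zero]
    linarith [norm_le_norm_add_norm_sub' (scale * z : ℂ) (x + y * I), norm_le_normBound x y]

lemma re_pos_of_isPos (hD : isPos D = true) (hz : z ∈ D) : 0 < z.re := by
  match D with
  | plane => exact absurd hD Bool.false_ne_true
  | mk x y r =>
    rw [mem_mk] at hz
    have hx : (r : ℝ) < x := by exact_mod_cast of_decide_eq_true hD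
    have hre := (abs_le.mp ((abs_re_le_norm _).trans hz)).1
    simp only [sub_re, mul_re, natCast_re, natCast_im, add_re, intCast_re, intCast_im, I_re, I_im,
      mul_zero, mul_one, zero_mul, sub_zero, add_zero] at hre
    exact pos_of_mul_pos_right (by linarith : 0 < scale * z.re) scale_pos.le

end Disc

/-! ### Interpolation with an error bound -/

namespace Disc

/-- Divided differences with respect to the node `x` and the value `v`, in a table of nodes and
values. -/
def divDiff (x v : Disc) (l : List (Disc × Disc)) : List (Disc × Disc) :=
  l.map fun p => (p.1, (p.2 - v) * (p.1 - x)⁻¹)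

/-- The nodes and the coefficients of the Newton interpolation polynomial of a table of nodes and
values. The first argument is fuel, to be at least the length of the table. -/
def newtonCoeffs : ℕ → List (Disc × Disc) → List (Disc × Disc)
  | n + 1, (x, v) :: l => (x, v) :: newtonCoeffs n (divDiff x v l)
  | _, _ => []

/-- The value at `z` of a function with nonnegative Taylor coefficients and given Newton
coefficients: all but the last term of the Newton polynomial are taken as they are, and the last
coefficient, which majorizes the remainder, is replaced by a disc around `0`. -/
def horner (z : Disc) : List (Disc × Disc) → Disc
  | [] => plane
  | [(_, v)] => centered v
  | (x, v) :: l => v + (z - x) * horner z l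

/-- The table `l` contains the nodes `xs` and the values of `f` there. -/
def IsTable (f : ℂ → ℂ) (xs : List ℝ) (l : List (Disc × Disc)) : Prop :=
  List.Forall₂ (fun (x : ℝ) (p : Disc × Disc) => (x : ℂ) ∈ p.1 ∧ f x ∈ p.2) xs l

lemma IsTable.divDiff {f g : ℂ → ℂ} {x : ℝ} {X V : Disc} (hX : (x : ℂ) ∈ X) (hV : f x ∈ V)
    (hfg : ∀ z, f z = f x + (z - x) * g z) {xs : List ℝ} {l : List (Disc × Disc)}
    (hl : IsTable f xs l) (hxs : ∀ y ∈ xs, x < y) : IsTable g xs (Disc.divDiff X V l) := by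
  induction hl with
  | nil => exact .nil
  | @cons y p ys ps hp _ ih =>
    rw [List.forall_mem_cons] at hxs
    refine .cons ⟨hp.1, ?_⟩ (ih hxs.2)
    have hne : (y - x : ℂ) ≠ 0 := sub_ne_zero.mpr (by exact_mod_cast hxs.1.ne')
    have hg : g y = (f y - f x) * (y - x : ℂ)⁻¹ := by
      rw [eq_mul_inv_iff_mul_eq₀ hne, hfg y]
      ring
    exact hg ▸ mem_mul (mem_sub hp.2 hV) (mem_inv (mem_sub hp.1 hX))

lemma mem_horner_newtonCoeffs {z : ℂ} {Z : Disc} (hz : z ∈ Z) {n : ℕ} {f : ℂ → ℂ} {x : ℝ}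
    {xs : List ℝ} {l : List (Disc × Disc)} (hf : HasNonnegCoeffs f) (hx : 0 ≤ x)
    (hxs : (x :: xs).Pairwise (· < ·)) (hl : IsTable f (x :: xs) l) (hn : xs.length < n)
    (hzx : ‖z‖ ≤ (x :: xs).getLast (List.cons_ne_nil x xs)) :
    f z ∈ horner Z (newtonCoeffs n l) := by
  induction n generalizing f x xs l with
  | zero => exact absurd hn (Nat.not_lt_zero _)
  | succ n ih =>
    obtain _ | @⟨_, ⟨X, V⟩, _, _, ⟨hX, hV⟩, htail⟩ := hl
    cases xs with
    | nil =>
      cases htail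
      have hnil : newtonCoeffs n [] = [] := by cases n <;> rfl
      rw [newtonCoeffs, divDiff, List.map_nil, hnil]
      exact mem_centered hV ((hf.norm_le_of_norm_le hzx).trans (re_le_norm _))
    | cons y ys =>
      obtain ⟨hxy, hys⟩ := List.pairwise_cons.mp hxs
      obtain ⟨g, hg, hfg⟩ := hf.exists_divided_difference hx
      have htable := IsTable.divDiff hX hV hfg htail hxy
      obtain ⟨m, rfl⟩ := Nat.exists_eq_add_of_le' (Nat.one_le_of_lt (Nat.lt_of_succ_lt_succ hn))
      have hgz := ih hg (hx.trans (hxy y List.mem_cons_self).le) hys htable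
        (Nat.lt_of_succ_lt_succ hn) (by rwa [List.getLast_cons_cons] at hzx)
      obtain _ | @⟨_, ⟨Y, W⟩, _, _, _, _⟩ := htail
      rw [hfg z]
      exact mem_add hV (mem_mul (mem_sub hz hX) hgz)

end Disc

/-! ### Values of `chi` at even integers -/

section EvenValues

open Finset Nat

lemma bernoulli'_six : bernoulli' 6 = 1 / 42 := by
  rw [bernoulli'_def]
  norm_num [sum_range_succ, Nat.choose, bernoulli'_eq_zero_of_odd, Nat.odd_iff]

lemma bernoulli'_eight : bernoulli' 8 = -1 / 30 := by
  rw [bernoulli'_def]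
  norm_num [sum_range_succ, Nat.choose, bernoulli'_eq_zero_of_odd, Nat.odd_iff, bernoulli'_six]

lemma bernoulli'_ten : bernoulli' 10 = 5 / 66 := by
  rw [bernoulli'_def]
  norm_num [sum_range_succ, Nat.choose, bernoulli'_eq_zero_of_odd, Nat.odd_iff, bernoulli'_six,
    bernoulli'_eight]

lemma bernoulli'_twelve : bernoulli' 12 = -691 / 2730 := by
  rw [bernoulli'_def]
  norm_num [sum_range_succ, Nat.choose, bernoulli'_eq_zero_of_odd, Nat.odd_iff, bernoulli'_six,
    bernoulli'_eight, bernoulli'_ten]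

lemma bernoulli'_fourteen : bernoulli' 14 = 7 / 6 := by
  rw [bernoulli'_def]
  norm_num [sum_range_succ, Nat.choose, bernoulli'_eq_zero_of_odd, Nat.odd_iff, bernoulli'_six,
    bernoulli'_eight, bernoulli'_ten, bernoulli'_twelve]

lemma chi_two_mul_succ (k : ℕ) : chi (2 * (k + 1 : ℕ)) =
    2 * (k + 1) * (2 * (k + 1) - 1) * k ! * ((-1) ^ (k + 2) * 2 ^ (2 * k + 1) *
      bernoulli' (2 * (k + 1)) / (2 * (k + 1))!) * (Real.pi : ℂ) ^ (k + 1) := by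
  have hpi : (Real.pi : ℂ) ≠ 0 := ofReal_ne_zero.mpr Real.pi_ne_zero
  have hexp : -(2 * ((k + 1 : ℕ) : ℂ)) / 2 = -((k + 1 : ℕ) : ℂ) := by ring
  have harg : 2 * ((k + 1 : ℕ) : ℂ) / 2 = k + 1 := by push_cast; ring
  have hpow : (Real.pi : ℂ) ^ (2 * (k + 1)) = Real.pi ^ (k + 1) * Real.pi ^ (k + 1) := by ring
  rw [chi_eq_Gammaℝ_mul_riemannZeta, riemannZeta_two_mul_nat k.succ_ne_zero, Gammaℝ_def, hexp, harg,
    Complex.Gamma_nat_eq_factorial, cpow_neg, cpow_natCast,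
    bernoulli_eq_bernoulli'_of_ne_one (by omega), show 2 * (k + 1) - 1 = 2 * k + 1 by omega, hpow]
  · push_cast
    field_simp
  · simp only [mul_re, re_ofNat, natCast_re, im_ofNat, natCast_im, mul_zero, sub_zero]
    positivity
  · exact_mod_cast (by omega : 2 * (k + 1) ≠ 1)

lemma chi_two : chi 2 = Real.pi / 3 := by
  have h := chi_two_mul_succ 0
  norm_num at h
  rw [h]
  ring

lemma chi_four : chi 4 = 2 / 15 * Real.pi ^ 2 := by
  have h := chi_two_mul_succ 1
  norm_num [factorial] at h
  exact h

lemma chi_six : chi 6 = 4 / 63 * Real.pi ^ 3 := by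
  have h := chi_two_mul_succ 2
  norm_num [factorial, bernoulli'_six] at h
  exact h

lemma chi_eight : chi 8 = 8 / 225 * Real.pi ^ 4 := by
  have h := chi_two_mul_succ 3
  norm_num [factorial, bernoulli'_eight] at h
  exact h

lemma chi_ten : chi 10 = 16 / 693 * Real.pi ^ 5 := by
  have h := chi_two_mul_succ 4
  norm_num [factorial, bernoulli'_ten] at h
  exact h

lemma chi_twelve : chi 12 = 22112 / 1289925 * Real.pi ^ 6 := by
  have h := chi_two_mul_succ 5
  norm_num [factorial, bernoulli'_twelve] at h
  exact h

lemma chi_fourteen : chi 14 = 64 / 4455 * Real.pi ^ 7 := by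
  have h := chi_two_mul_succ 6
  norm_num [factorial, bernoulli'_fourteen] at h
  exact h

end EvenValues

/-! ### Enclosures of `chi` and of the constants -/

/-- The first Schur parameter of `w ↦ χ w / χ (w + 1)` at the points `1, 2`: its value at `1`. -/
noncomputable def schurOne : ℝ := 3 / Real.pi

/-- The second Schur parameter of `w ↦ χ w / χ (w + 1)` at the points `1, 2`: the value at `2` of
the function `G` with `χ w / χ (w + 1) = mobius schurOne (cayley 1 w * G w)`. -/
noncomputable def schurTwo : ℝ :=
  3 * ((Real.pi / 3 - schurOne) / ((chi 3).re - 1) - schurOne)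

/-- The constant for which `splitting` vanishes at `1 / 3` and `2 / 3`. -/
noncomputable def balance : ℝ :=
  2 * ((1 - 2 / 3 * A.re) * (chi (4 / 3)).re) / ((chi (4 / 3)).re + (chi (2 / 3)).re)

lemma ofReal_re_A : (A.re : ℂ) = A := by
  rw [show A = ((Real.pi / 3 - 1 : ℝ) : ℂ) by push_cast; rfl, ofReal_re]

lemma ofReal_schurOne : (schurOne : ℂ) = 3 * (Real.pi : ℂ)⁻¹ := by
  rw [schurOne]
  push_cast
  ring

lemma ofReal_schurTwo : (schurTwo : ℂ) =
    3 * ((Real.pi * 3⁻¹ - schurOne) * (chi 3 - 1)⁻¹ - schurOne) := by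
  have h₃ : ((chi 3).re : ℂ) = chi 3 := by simpa using ofReal_re_chi 3
  rw [schurTwo]
  push_cast
  rw [h₃]
  ring

lemma ofReal_balance : (balance : ℂ) =
    2 * ((1 - 2 * 3⁻¹ * A) * chi (4 * 3⁻¹)) * (chi (4 * 3⁻¹) + chi (2 * 3⁻¹))⁻¹ := by
  have h₄ : ((chi (4 / 3)).re : ℂ) = chi (4 / 3) := by simpa using ofReal_re_chi (4 / 3)
  have h₂ : ((chi (2 / 3)).re : ℂ) = chi (2 / 3) := by simpa using ofReal_re_chi (2 / 3)
  rw [balance]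
  push_cast
  rw [h₄, h₂, ofReal_re_A]
  simp only [div_eq_mul_inv]

namespace Disc

/-- An enclosure of `π`. -/
protected def pi : Disc := make 3141592653589793238465000000000 0 5000000000

/-- An enclosure of `D ^ n`. -/
protected def pow (D : Disc) : ℕ → Disc
  | 0 => 1
  | n + 1 => D * Disc.pow D n

/-- An enclosure of the interpolation node `(2 n - 1 / 2) ^ 2`. -/
def node (n : ℕ) : Disc := (2 * nat n - 2⁻¹) * (2 * nat n - 2⁻¹)

/-- An enclosure of the value of `zetaSeries` at `(2 n - 1 / 2) ^ 2`, computed from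
`χ (2 n) = p / q * π ^ n`. -/
def nodeValue (n p q : ℕ) : Disc :=
  (nat p * (nat q)⁻¹ * Disc.pow Disc.pi n - 1) * (2 * nat n * (2 * nat n - 1))⁻¹

/-- The Newton coefficients of `zetaSeries` at the nodes `(2 n - 1 / 2) ^ 2` for
`n = 1, …, 7`. -/
def zetaCoeffs : List (Disc × Disc) :=
  newtonCoeffs 7 [(node 1, nodeValue 1 1 3), (node 2, nodeValue 2 2 15),
    (node 3, nodeValue 3 4 63), (node 4, nodeValue 4 8 225), (node 5, nodeValue 5 16 693),
    (node 6, nodeValue 6 22112 1289925), (node 7, nodeValue 7 64 4455)]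

/-- An enclosure of the values of `chi` on a disc. -/
protected def chi (s : Disc) : Disc :=
  let x := (s - 2⁻¹) * (s - 2⁻¹)
  (x - 4⁻¹) * horner x zetaCoeffs + 1

/-- An enclosure of `_root_.A`. -/
protected def A : Disc := Disc.pi * 3⁻¹ - 1

/-- An enclosure of `XiQuotient.schurOne`. -/
protected def schurOne : Disc := 3 * Disc.pi⁻¹

/-- An enclosure of `XiQuotient.schurTwo`. -/
protected def schurTwo : Disc :=
  3 * ((Disc.pi * 3⁻¹ - Disc.schurOne) * (Disc.chi 3 - 1)⁻¹ - Disc.schurOne)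

/-- An enclosure of `XiQuotient.balance`. -/
protected def balance : Disc :=
  2 * ((1 - 2 * 3⁻¹ * Disc.A) * Disc.chi (4 * 3⁻¹)) *
    (Disc.chi (4 * 3⁻¹) + Disc.chi (2 * 3⁻¹))⁻¹

lemma mem_pi : (Real.pi : ℂ) ∈ Disc.pi := by
  have hcenter : (scale * Real.pi - ((3141592653589793238465000000000 : ℤ) + (0 : ℤ) * I) : ℂ) =
      (scale * Real.pi - 3141592653589793238465000000000 : ℝ) := by
    push_cast
    ring
  have hgt := Real.pi_gt_d20
  have hlt := Real.pi_lt_d20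
  rw [Disc.pi, mem_make, hcenter, norm_real, Real.norm_eq_abs, abs_le]
  norm_num [scale] at *
  constructor <;> linarith

lemma mem_pow {z : ℂ} {D : Disc} (hz : z ∈ D) (n : ℕ) : z ^ n ∈ Disc.pow D n := by
  induction n with
  | zero => exact pow_zero z ▸ mem_one
  | succ n ih => exact pow_succ' z n ▸ mem_mul hz ih

lemma mem_node (n : ℕ) : (((2 * n - 1 / 2) ^ 2 : ℝ) : ℂ) ∈ node n := by
  have h : (2 * n - 2⁻¹ : ℂ) ∈ 2 * nat n - 2⁻¹ :=
    mem_sub (mem_mul (mem_ofNat 2) (mem_nat n)) (mem_inv (mem_ofNat 2))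
  have hsq : (((2 * n - 1 / 2) ^ 2 : ℝ) : ℂ) = (2 * n - 2⁻¹) * (2 * n - 2⁻¹) := by
    push_cast
    ring
  rw [hsq, node]
  exact mem_mul h h

lemma mem_nodeValue {n p q : ℕ} (hn : n ≠ 0)
    (h : _root_.chi (2 * n) = p / q * (Real.pi : ℂ) ^ n) :
    zetaSeries ((2 * n - 1 / 2) ^ 2 : ℝ) ∈ nodeValue n p q := by
  have hne : (2 * n * (2 * n - 1) : ℂ) ≠ 0 := by
    have hne_one : (2 * n : ℂ) ≠ 1 := by exact_mod_cast (by omega : 2 * n ≠ 1)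
    exact mul_ne_zero (mul_ne_zero two_ne_zero (Nat.cast_ne_zero.mpr hn)) (sub_ne_zero.mpr hne_one)
  have hvalue : zetaSeries ((2 * n - 1 / 2) ^ 2 : ℝ) =
      ((p : ℂ) * (q : ℂ)⁻¹ * (Real.pi : ℂ) ^ n - 1) * (2 * n * (2 * n - 1) : ℂ)⁻¹ := by
    rw [eq_mul_inv_iff_mul_eq₀ hne, ← div_eq_mul_inv, ← h, chi_eq_zetaSeries]
    push_cast
    ring
  have htwo_mul : (2 * n : ℂ) ∈ 2 * nat n := mem_mul (mem_ofNat 2) (mem_nat n)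
  rw [hvalue, nodeValue]
  exact mem_mul (mem_sub (mem_mul (mem_mul (mem_nat p) (mem_inv (mem_nat q))) (mem_pow mem_pi n))
    mem_one) (mem_inv (mem_mul htwo_mul (mem_sub htwo_mul mem_one)))

lemma IsTable.cons_node {l : List ℕ} {t : List (Disc × Disc)}
    (ht : IsTable zetaSeries (l.map fun n : ℕ => (2 * n - 1 / 2) ^ 2) t) {n p q : ℕ} (hn : n ≠ 0)
    (h : _root_.chi (2 * n) = p / q * (Real.pi : ℂ) ^ n) :
    IsTable zetaSeries ((n :: l).map fun n : ℕ => (2 * n - 1 / 2) ^ 2)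
      ((node n, nodeValue n p q) :: t) :=
  .cons ⟨mem_node n, mem_nodeValue hn h⟩ ht

lemma mem_horner_zetaCoeffs {z : ℂ} {Z : Disc} (hz : z ∈ Z) (hz' : ‖z‖ ≤ (27 / 2) ^ 2) :
    zetaSeries z ∈ horner Z zetaCoeffs := by
  have htable : IsTable zetaSeries ([1, 2, 3, 4, 5, 6, 7].map fun n : ℕ => (2 * n - 1 / 2) ^ 2)
      [(node 1, nodeValue 1 1 3), (node 2, nodeValue 2 2 15), (node 3, nodeValue 3 4 63),
        (node 4, nodeValue 4 8 225), (node 5, nodeValue 5 16 693),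
        (node 6, nodeValue 6 22112 1289925), (node 7, nodeValue 7 64 4455)] := by
    iterate 7 refine .cons_node ?_ (by norm_num) ?_
    · exact .nil
    all_goals norm_num [chi_two, chi_four, chi_six, chi_eight, chi_ten, chi_twelve, chi_fourteen]
    ring
  refine mem_horner_newtonCoeffs hz hasNonnegCoeffs_zetaSeries (by positivity) ?_ htable
    (by norm_num) ?_
  · norm_num
  · norm_num at hz' ⊢
    exact hz'

lemma mem_chi {s : ℂ} {S : Disc} (hs : s ∈ S) (hs' : ‖s - 1 / 2‖ ≤ 27 / 2) :
    _root_.chi s ∈ Disc.chi S := by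
  have hx : (s - 1 / 2) ^ 2 ∈ (S - 2⁻¹) * (S - 2⁻¹) := by
    rw [sq, one_div]
    exact mem_mul (mem_sub hs (mem_inv (mem_ofNat 2))) (mem_sub hs (mem_inv (mem_ofNat 2)))
  rw [chi_eq_zetaSeries, one_div 4]
  exact mem_add (mem_mul (mem_sub hx (mem_inv (mem_ofNat 4)))
    (mem_horner_zetaCoeffs hx (by rw [norm_pow]; gcongr))) mem_one

lemma mem_A : A ∈ Disc.A := by
  rw [A, div_eq_mul_inv]
  exact mem_sub (mem_mul mem_pi (mem_inv (mem_ofNat 3))) mem_one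

lemma mem_schurOne : (schurOne : ℂ) ∈ Disc.schurOne :=
  ofReal_schurOne ▸ mem_mul (mem_ofNat 3) (mem_inv mem_pi)

lemma mem_schurTwo : (schurTwo : ℂ) ∈ Disc.schurTwo := by
  have h₃ : _root_.chi 3 ∈ Disc.chi 3 := mem_chi (mem_ofNat 3) (by norm_num)
  rw [ofReal_schurTwo, Disc.schurTwo]
  apply_rules [mem_pi, mem_schurOne, mem_sub, mem_mul, mem_inv, mem_ofNat, mem_one]

lemma mem_balance : (balance : ℂ) ∈ Disc.balance := by
  have h₄ : _root_.chi (4 * 3⁻¹) ∈ Disc.chi (4 * 3⁻¹) :=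
    mem_chi (mem_mul (mem_ofNat 4) (mem_inv (mem_ofNat 3))) (by norm_num)
  have h₂ : _root_.chi (2 * 3⁻¹) ∈ Disc.chi (2 * 3⁻¹) :=
    mem_chi (mem_mul (mem_ofNat 2) (mem_inv (mem_ofNat 3))) (by norm_num)
  rw [ofReal_balance, Disc.balance]
  apply_rules [mem_A, mem_add, mem_sub, mem_mul, mem_inv, mem_ofNat, mem_one]

end Disc

lemma schurOne_pos : 0 < schurOne := div_pos three_pos Real.pi_pos

lemma abs_schurOne_lt_one : |schurOne| < 1 := by
  rw [abs_of_pos schurOne_pos, schurOne, div_lt_one Real.pi_pos]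
  exact Real.pi_gt_three

lemma schurTwo_neg : schurTwo < 0 := by
  have h := Disc.re_pos_of_isPos (D := 0 - Disc.schurTwo) (by decide +kernel)
    (Disc.mem_sub (Disc.mem_nat 0) Disc.mem_schurTwo)
  simpa using h

lemma abs_schurTwo_lt_one : |schurTwo| < 1 := by
  have h := Disc.re_pos_of_isPos (D := 1 + Disc.schurTwo) (by decide +kernel)
    (Disc.mem_add Disc.mem_one Disc.mem_schurTwo)
  rw [abs_of_neg schurTwo_neg]
  norm_num at h
  linarith

lemma balance_pos : 0 < balance := by
  simpa using Disc.re_pos_of_isPos (by decide +kernel) Disc.mem_balance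

lemma balance_lt_one : balance < 1 := by
  have h := Disc.re_pos_of_isPos (D := 1 - Disc.balance) (by decide +kernel)
    (Disc.mem_sub Disc.mem_one Disc.mem_balance)
  simpa using h

/-! ### The ratios `χ w / χ (w + 1)` -/

/-- The ratio `χ w / χ (w + 1)`. -/
noncomputable def shiftRatio (w : ℂ) : ℂ := chi w / chi (w + 1)

lemma norm_shiftRatio_le {w : ℂ} (hw : 0 ≤ w.re) : ‖shiftRatio w‖ ≤ 1 := by
  have h := norm_chi_sub_one_le (w := w + 1) (by simpa)
  rw [add_sub_cancel_right] at h
  rw [shiftRatio, norm_div]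
  exact div_le_one_of_le₀ h (norm_nonneg _)

lemma shiftRatio_conj (w : ℂ) :
    shiftRatio ((starRingEnd ℂ) w) = (starRingEnd ℂ) (shiftRatio w) := by
  simp only [shiftRatio, map_div₀, ← chi_conj, map_add, map_one]

lemma chi_add_one_ne_zero {w : ℂ} (hw : 0 ≤ w.re) : chi (w + 1) ≠ 0 :=
  chi_ne_zero (by rw [add_re, one_re]; linarith)

lemma differentiableAt_shiftRatio {w : ℂ} (hw : 0 ≤ w.re) : DifferentiableAt ℂ shiftRatio w :=
  (differentiable_chi w).div
    (differentiable_chi.comp (differentiable_id.add_const 1) w) (chi_add_one_ne_zero hw)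

lemma shiftRatio_one : shiftRatio 1 = schurOne := by
  rw [shiftRatio, chi_one, one_add_one_eq_two, chi_two, schurOne]
  push_cast
  rw [one_div_div]

lemma one_lt_re_chi_three : 1 < (chi 3).re := by
  have hmono : (chi 2).re ≤ (chi 3).re := by
    simpa using re_chi_mono (x := 2) (y := 3) (by norm_num) (by norm_num)
  have htwo : (chi 2).re = Real.pi / 3 := by rw [chi_two]; norm_num
  linarith [Real.pi_gt_three]

lemma eq_schurTwo_of_shiftRatio_two {g : ℂ} (hg : ‖g‖ ≤ 1)
    (h : shiftRatio 2 = mobius schurOne (cayley 1 2 * g)) : g = schurTwo := by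
  have hpi : (Real.pi : ℂ) ≠ 0 := ofReal_ne_zero.mpr Real.pi_ne_zero
  have hchi : chi 3 ≠ 0 := chi_ne_zero (by norm_num)
  have hchi' : chi 3 - 1 ≠ 0 := sub_ne_zero.mpr fun h => by
    simpa [h] using one_lt_re_chi_three
  have hcayley : cayley 1 2 = 3⁻¹ := by norm_num [cayley]
  have hden : 1 + schurOne * (3⁻¹ * g) ≠ 0 := one_add_mul_ne_zero abs_schurOne_lt_one (by
    rw [norm_mul]
    norm_num
    linarith)
  rw [shiftRatio, hcayley, mobius, chi_two, show (2 + 1 : ℂ) = 3 by norm_num,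
    div_eq_div_iff hchi hden, ofReal_schurOne] at h
  rw [ofReal_schurTwo, ofReal_schurOne]
  field_simp at h ⊢
  linear_combination (-1 : ℂ) * h

lemma exists_shiftRatio_eq_mobius {w : ℂ} (hw : 0 < w.re) : ∃ g ζ : ℂ, ‖g‖ ≤ 1 ∧ ‖ζ‖ ≤ 1 ∧
    shiftRatio w = mobius schurOne (cayley 1 w * g) ∧
      g = mobius schurTwo (cayley 2 w * ζ) := by
  obtain ⟨G, hGdiff, hG, hratio⟩ := exists_schwarz_pick one_pos
    (fun w hw => differentiableAt_shiftRatio hw.le) (fun w hw => norm_shiftRatio_le hw.le)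
    abs_schurOne_lt_one (by rw [ofReal_one, shiftRatio_one])
  have htwo : G (2 : ℝ) = schurTwo :=
    eq_schurTwo_of_shiftRatio_two (hG _ (by norm_num)) (by simpa using hratio 2 (by norm_num))
  obtain ⟨ζ, -, hζ, hGζ⟩ := exists_schwarz_pick two_pos hGdiff hG abs_schurTwo_lt_one htwo
  exact ⟨G w, ζ w, hG w hw, hζ w hw, hratio w hw, hGζ w hw⟩

namespace Disc

/-- An enclosure of `XiQuotient.cayley`. -/
protected def cayley (p w : Disc) : Disc := (w - p) * (w + p)⁻¹

/-- An enclosure of `XiQuotient.mobius`, in a form in which the variable occurs once. -/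
protected def mobius (b u : Disc) : Disc := b⁻¹ - (b⁻¹ - b) * (1 + b * u)⁻¹

/-- An enclosure of `XiQuotient.shiftRatio` on the right half-plane. -/
protected def shiftRatio (w : Disc) : Disc :=
  Disc.mobius Disc.schurOne
    (Disc.cayley 1 w * Disc.mobius Disc.schurTwo (Disc.cayley 2 w * unit))

variable {w u : ℂ} {W U : Disc}

lemma mem_cayley {p : ℝ} {P : Disc} (hp : (p : ℂ) ∈ P) (hw : w ∈ W) :
    cayley p w ∈ Disc.cayley P W :=
  mem_mul (mem_sub hw hp) (mem_inv (mem_add hw hp))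

lemma mem_mobius {β : ℝ} {B : Disc} (hβ₀ : β ≠ 0) (hβ : |β| < 1) (hB : (β : ℂ) ∈ B)
    (hu : u ∈ U) (hu' : ‖u‖ ≤ 1) : mobius β u ∈ Disc.mobius B U := by
  have hform : mobius β u = (β : ℂ)⁻¹ - ((β : ℂ)⁻¹ - β) * (1 + β * u)⁻¹ := by
    have hβ' : (β : ℂ) ≠ 0 := ofReal_ne_zero.mpr hβ₀
    have := one_add_mul_ne_zero hβ hu'
    rw [mobius]
    field_simp
    ring
  rw [hform]
  exact mem_sub (mem_inv hB) (mem_mul (mem_sub (mem_inv hB) hB)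
    (mem_inv (mem_add mem_one (mem_mul hB hu))))

lemma mem_shiftRatio (hw : w ∈ W) (hw' : 0 < w.re) : shiftRatio w ∈ Disc.shiftRatio W := by
  obtain ⟨g, ζ, hg, hζ, hratio, hgζ⟩ := exists_shiftRatio_eq_mobius hw'
  have hcayley {p : ℝ} (hp : 0 < p) {z : ℂ} (hz : ‖z‖ ≤ 1) : ‖cayley p w * z‖ ≤ 1 := by
    rw [norm_mul]
    exact mul_le_one₀ (norm_cayley_lt_one hp hw').le (norm_nonneg _) hz
  have hg_mem : g ∈ Disc.mobius Disc.schurTwo (Disc.cayley 2 W * unit) := hgζ ▸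
    mem_mobius schurTwo_neg.ne abs_schurTwo_lt_one mem_schurTwo
      (mem_mul (mem_cayley (by rw [ofReal_ofNat]; exact mem_ofNat 2) hw) (mem_unit hζ))
      (hcayley two_pos hζ)
  rw [hratio]
  exact mem_mobius schurOne_pos.ne' abs_schurOne_lt_one mem_schurOne
    (mem_mul (mem_cayley (by rw [ofReal_one]; exact mem_one) hw) hg_mem) (hcayley one_pos hg)

end Disc

/-! ### The critical line at height at most `20` -/

/-- The quotient `splitting s / (χ (2 s) χ (s + 1) χ (3 s))` as a polynomial in `s` and the ratios
`a = χ s / χ (s + 1)`, `c = χ (3 s - 1) / χ (3 s)` and `θ = χ (2 s - 1) / χ (2 s)`. -/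
noncomputable def ratioForm (a c θ s : ℂ) : ℂ :=
  (s - 1) * (3 * s - 2) * (A * (s - 1) + 1) -
    a * (2 * (s - 1) * (s - 2) + c * ((s + 1) * (s - 2) + balance * s * (1 + θ)))

/-- The value `ratioForm a c θ (2⁻¹ + w)`, for purely imaginary `w`, times a polynomial factor which
makes its real part positive. -/
noncomputable def lineForm (a c θ w : ℂ) : ℂ :=
  (w - 2⁻¹) * (4 + w) * (20 - w) * ratioForm a c θ (2⁻¹ + w)

/-- The value of `lineForm` at the point `2⁻¹ + t * I` of the critical line. -/
noncomputable def lineValue (t : ℝ) : ℂ :=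
  lineForm (shiftRatio (2⁻¹ + t * I)) (shiftRatio (2⁻¹ + 3 * (t * I))) (shiftRatio (2 * (t * I)))
    (t * I)

namespace Disc

/-- An enclosure of `XiQuotient.ratioForm`. -/
protected def ratioForm (a c θ s : Disc) : Disc :=
  (s - 1) * (3 * s - 2) * (Disc.A * (s - 1) + 1) -
    a * (2 * (s - 1) * (s - 2) + c * ((s + 1) * (s - 2) + Disc.balance * s * (1 + θ)))

/-- An enclosure of `XiQuotient.lineForm`. -/
protected def lineForm (a c θ w : Disc) : Disc :=
  (w - 2⁻¹) * (4 + w) * (20 - w) * Disc.ratioForm a c θ (2⁻¹ + w)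

/-- An enclosure of `χ (2 w) / χ (2 w + 1)` for purely imaginary `w`, where the numerator is the
complex conjugate of the denominator. -/
def phase (w : Disc) : Disc :=
  let z := Disc.chi (1 + 2 * w)
  conj z * z⁻¹

/-- Whether `32⁻¹ < re (lineValue t)` follows from disc arithmetic for all `t` in the interval with
centre `x / scale` and radius `r / scale`, given an enclosure `θ` of `χ (2 w) / χ (2 w + 1)`. -/
def checkInterval (θ : Disc → Disc) (x : ℤ) (r : ℕ) : Bool :=
  let w := make 0 x r
  isPos (Disc.lineForm (Disc.shiftRatio (2⁻¹ + w)) (Disc.shiftRatio (2⁻¹ + 3 * w)) (θ w) w - 32⁻¹)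

/-- Verifies a check, of intervals with integral centre and radius, on intervals which cover
`[x, e]`. The step width adapts: it grows by `1 / 16` after a success and shrinks by `1 / 4` after a
failure. The third argument bounds the number of steps, and `r` is the initial radius. -/
def sweep (check : ℤ → ℕ → Bool) (e : ℤ) : ℕ → ℤ → ℕ → Bool
  | 0, _, _ => false
  | n + 1, x, r => withInt x fun x => withNat r fun r =>
      decide (e < x) || bif check (x + r) r then sweep check e n (x + 2 * r) (r + r / 16)
        else sweep check e n x (3 * r / 4)

lemma forall_of_sweep {check : ℤ → ℕ → Bool} {P : ℝ → Prop}
    (hcheck : ∀ x r, check x r = true → ∀ y : ℝ, |y - x| ≤ r → P y) {e : ℤ} {n : ℕ} {x : ℤ} {r : ℕ}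
    (h : sweep check e n x r = true) {y : ℝ} (hxy : x ≤ y) (hye : y ≤ e) : P y := by
  induction n generalizing x r with
  | zero => exact absurd h Bool.false_ne_true
  | succ n ih =>
    rw [sweep, withInt_eq, withNat_eq, Bool.or_eq_true, decide_eq_true_iff] at h
    obtain hex | h := h
    · exact absurd (hxy.trans hye) (not_le.mpr (by exact_mod_cast hex))
    by_cases hc : check (x + r) r = true
    · rw [hc, cond_true] at h
      rcases le_total y (x + 2 * r) with hle | hle
      · refine hcheck _ _ hc y (abs_le.mpr ?_)
        push_cast
        constructor <;> linarith
      · exact ih h (by push_cast; exact hle)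
    · rw [Bool.not_eq_true] at hc
      rw [hc, cond_false] at h
      exact ih h hxy

lemma mem_make_zero {x : ℤ} {r : ℕ} {t : ℝ} (ht : |scale * t - x| ≤ r) :
    (t * I : ℂ) ∈ make 0 x r := by
  have hnorm : (scale * (t * I) - ((0 : ℤ) + x * I) : ℂ) = (scale * t - x : ℝ) * I := by
    push_cast
    ring
  rwa [mem_make, hnorm, norm_mul, norm_I, mul_one, norm_real, Real.norm_eq_abs]

lemma mem_phase {w : ℂ} {W : Disc} (hw : w ∈ W) (hre : w.re = 0) (him : |w.im| ≤ 6) :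
    shiftRatio (2 * w) ∈ phase W := by
  have hconj : (starRingEnd ℂ) w = -w := by
    apply Complex.ext <;> simp [hre]
  have hnum : chi (2 * w) = (starRingEnd ℂ) (chi (1 + 2 * w)) := by
    rw [← chi_conj, ← chi_one_sub]
    congr 1
    simp [hconj, map_ofNat, sub_eq_add_neg]
  have hnorm : ‖1 + 2 * w - 1 / 2‖ ≤ 27 / 2 := by
    have h := norm_add_le (1 / 2 : ℂ) (2 * w)
    have hw_norm := norm_le_abs_re_add_abs_im w
    rw [hre, abs_zero, zero_add] at hw_norm
    rw [show 1 + 2 * w - 1 / 2 = 1 / 2 + 2 * w by ring]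
    norm_num at h
    linarith
  have hchi : chi (1 + 2 * w) ∈ Disc.chi (1 + 2 * W) :=
    mem_chi (mem_add mem_one (mem_mul (mem_ofNat 2) hw)) hnorm
  rw [shiftRatio, add_comm (2 * w), hnum]
  exact mem_mul (mem_conj hchi) (mem_inv hchi)

lemma mem_lineForm {a c θ w : ℂ} {a' c' θ' W : Disc} (ha : a ∈ a') (hc : c ∈ c') (hθ : θ ∈ θ')
    (hw : w ∈ W) : lineForm a c θ w ∈ Disc.lineForm a' c' θ' W := by
  have hs : 2⁻¹ + w ∈ 2⁻¹ + W := mem_add (mem_inv (mem_ofNat 2)) hw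
  have hratio : ratioForm a c θ (2⁻¹ + w) ∈ Disc.ratioForm a' c' θ' (2⁻¹ + W) := by
    generalize 2⁻¹ + w = s, 2⁻¹ + W = S at hs
    rw [ratioForm, Disc.ratioForm]
    apply_rules [mem_A, mem_balance, mem_add, mem_sub, mem_mul, mem_ofNat, mem_one]
  exact mem_mul (mem_mul (mem_mul (mem_sub hw (mem_inv (mem_ofNat 2))) (mem_add (mem_ofNat 4) hw))
    (mem_sub (mem_ofNat 20) hw)) hratio

lemma lt_re_lineValue_of_checkInterval {θ : Disc → Disc} {x : ℤ} {r : ℕ}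
    (h : checkInterval θ x r = true) {t : ℝ} (ht : |scale * t - x| ≤ r)
    (hθ : shiftRatio (2 * (t * I)) ∈ θ (make 0 x r)) : 32⁻¹ < (lineValue t).re := by
  have hw := mem_make_zero ht
  have hratio {c : ℂ} {C : Disc} (hc : c * (t * I) ∈ C) (hre : (c * (t * I)).re = 0) :
      shiftRatio (2⁻¹ + c * (t * I)) ∈ Disc.shiftRatio (2⁻¹ + C) :=
    mem_shiftRatio (mem_add (mem_inv (mem_ofNat 2)) hc) (by rw [add_re, hre]; norm_num)
  have hmem : lineValue t - 32⁻¹ ∈ _ := mem_sub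
    (mem_lineForm (by simpa using hratio (c := 1) (by simpa using hw) (by simp))
      (hratio (mem_mul (mem_ofNat 3) hw) (by simp)) hθ hw) (mem_inv (mem_ofNat 32))
  simpa using re_pos_of_isPos h hmem

lemma lt_re_lineValue_of_sweep {θ : Disc → Disc} {e : ℤ} {n : ℕ} {x : ℤ} {r : ℕ}
    (h : sweep (checkInterval θ) e n x r = true) {t : ℝ}
    (hθ : ∀ W : Disc, (t * I : ℂ) ∈ W → shiftRatio (2 * (t * I)) ∈ θ W)
    (hxt : x ≤ scale * t) (hte : scale * t ≤ e) : 32⁻¹ < (lineValue t).re :=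
  forall_of_sweep (P := fun y => scale * t = y → 32⁻¹ < (lineValue t).re)
    (fun _ _ hcheck _ hy hty => lt_re_lineValue_of_checkInterval hcheck (hty ▸ hy)
      (hθ _ (mem_make_zero (hty ▸ hy)))) h hxt hte rfl

lemma sweep_phase : sweep (checkInterval phase) (4150 * 10 ^ 27) 600 0 (10 ^ 27) = true := by
  decide +kernel

lemma sweep_unit : sweep (checkInterval fun _ => unit) (20000 * 10 ^ 27) 800 (4150 * 10 ^ 27)
    (10 ^ 27) = true := by
  decide +kernel

end Disc

lemma lt_re_lineValue_of_le_twenty {t : ℝ} (ht₀ : 0 ≤ t) (ht : t ≤ 20) :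
    32⁻¹ < (lineValue t).re := by
  have hphase (ht' : t ≤ 6) (W : Disc) (hW : (t * I : ℂ) ∈ W) :
      shiftRatio (2 * (t * I)) ∈ Disc.phase W :=
    Disc.mem_phase hW (by simp) (by simpa [abs_of_nonneg ht₀])
  rcases le_total t (83 / 20) with hlow | hhigh
  · refine Disc.lt_re_lineValue_of_sweep Disc.sweep_phase (hphase (by linarith)) ?_ ?_
    all_goals norm_num [scale]; linarith
  · refine Disc.lt_re_lineValue_of_sweep Disc.sweep_unit
      (fun _ _ => Disc.mem_unit (norm_shiftRatio_le (by simp))) ?_ ?_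
    all_goals norm_num [scale]; linarith

/-! ### The whole critical line -/

lemma norm_le_of_normSq_le {z : ℂ} {b : ℝ} (hb : 0 ≤ b) (h : normSq z ≤ b ^ 2) : ‖z‖ ≤ b :=
  abs_le_of_sq_le_sq' (by rwa [← normSq_eq_norm_sq]) hb |>.2

lemma norm_ofReal_add_mul_I_le (x : ℝ) {t : ℝ} (ht : 0 < t) :
    ‖(x + t * I : ℂ)‖ ≤ t + x ^ 2 / (2 * t) := by
  refine norm_le_of_normSq_le (by positivity) ?_
  rw [normSq_add_mul_I, add_sq, show 2 * t * (x ^ 2 / (2 * t)) = x ^ 2 by field_simp]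
  linarith [sq_nonneg (x ^ 2 / (2 * t))]

lemma norm_lineForm_prefactor_le {t : ℝ} (ht : 0 < t) :
    ‖(t * I - 2⁻¹) * (4 + t * I) * (20 - t * I)‖ ≤
      (t ^ 2 + 1 / 8) * (t ^ 2 + 8) * (t ^ 2 + 200) / t ^ 3 := by
  have hhalf := norm_ofReal_add_mul_I_le (-2⁻¹) ht
  have hfour := norm_ofReal_add_mul_I_le 4 ht
  rw [ofReal_ofNat] at hfour
  have htwenty := norm_ofReal_add_mul_I_le (-20) ht
  rw [show ((-2⁻¹ : ℝ) + t * I : ℂ) = t * I - 2⁻¹ by push_cast; ring] at hhalf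
  rw [show ((-20 : ℝ) + t * I : ℂ) = -(20 - t * I) by push_cast; ring, norm_neg] at htwenty
  rw [norm_mul, norm_mul]
  calc _ ≤ (t + (-2⁻¹) ^ 2 / (2 * t)) * (t + 4 ^ 2 / (2 * t)) * (t + (-20) ^ 2 / (2 * t)) := by
        gcongr
    _ = _ := by field_simp; ring

lemma norm_balance_le : ‖(balance : ℂ)‖ ≤ 1 := by
  rw [norm_real, Real.norm_of_nonneg balance_pos.le]
  exact balance_lt_one.le

section LargeHeight

variable {a c θ : ℂ}

lemma norm_lineForm_remainder_le (ha : ‖a‖ ≤ 1) (hc : ‖c‖ ≤ 1) (hθ : ‖θ‖ ≤ 1) {t : ℝ}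
    (ht : 4 ≤ t) {s : ℂ} (hs : s = 2⁻¹ + t * I) :
    ‖a * (2 * (s - 1) * (s - 2) + c * ((s + 1) * (s - 2) + balance * s * (1 + θ)))‖ ≤
      3 * t ^ 2 + 2 * t + 5 := by
  have hs_norm : ‖s‖ ≤ t + 1 / 8 := by
    have h := norm_ofReal_add_mul_I_le 2⁻¹ (by linarith : 0 < t)
    rw [ofReal_inv, ofReal_ofNat, ← hs] at h
    refine h.trans (add_le_add_right ?_ t)
    rw [div_le_iff₀ (by linarith)]
    linarith
  have hbelow : ‖(s - 1) * (s - 2)‖ ≤ t ^ 2 + 5 / 4 := by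
    refine norm_le_of_normSq_le (by positivity) ?_
    simp only [hs, normSq_apply, mul_re, mul_im, add_re, add_im, sub_re, sub_im, inv_re, inv_im,
      re_ofNat, im_ofNat, ofReal_re, ofReal_im, one_re, one_im, I_re, I_im]
    nlinarith
  have hacross : ‖(s + 1) * (s - 2)‖ ≤ t ^ 2 + 9 / 4 := by
    refine norm_le_of_normSq_le (by positivity) ?_
    simp only [hs, normSq_apply, mul_re, mul_im, add_re, add_im, sub_re, sub_im, inv_re, inv_im,
      re_ofNat, im_ofNat, ofReal_re, ofReal_im, one_re, one_im, I_re, I_im]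
    nlinarith
  have hbalance : ‖balance * s * (1 + θ)‖ ≤ (t + 1 / 8) * 2 := by
    rw [norm_mul, norm_mul]
    refine mul_le_mul ((mul_le_of_le_one_left (norm_nonneg _) norm_balance_le).trans hs_norm)
      ((norm_add_le _ _).trans ?_) (norm_nonneg _) (by linarith)
    rw [norm_one]
    linarith
  calc _ ≤ ‖2 * ((s - 1) * (s - 2)) + c * ((s + 1) * (s - 2) + balance * s * (1 + θ))‖ := by
        rw [norm_mul, mul_assoc 2]
        exact mul_le_of_le_one_left (norm_nonneg _) ha
    _ ≤ 2 * ‖(s - 1) * (s - 2)‖ + ‖(s + 1) * (s - 2) + balance * s * (1 + θ)‖ := by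
        refine (norm_add_le _ _).trans (add_le_add ?_ ?_)
        · rw [norm_mul, norm_ofNat]
        · rw [norm_mul]
          exact mul_le_of_le_one_left (norm_nonneg _) hc
    _ ≤ _ := by linarith [norm_add_le ((s + 1) * (s - 2)) (balance * s * (1 + θ))]

lemma re_lineForm_main (t : ℝ) {s : ℂ} (hs : s = 2⁻¹ + t * I) :
    ((t * I - 2⁻¹) * (4 + t * I) * (20 - t * I) *
        ((s - 1) * (3 * s - 2) * (A * (s - 1) + 1))).re =
      -10 + 2079 / 8 * t ^ 2 + 103 / 2 * t ^ 4 +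
        A.re * (5 - 3647 / 16 * t ^ 2 + 157 * t ^ 4 + 3 * t ^ 6) := by
  rw [hs, ← ofReal_re_A]
  simp only [mul_re, mul_im, add_re, add_im, sub_re, sub_im, inv_re, inv_im, re_ofNat, im_ofNat,
    normSq_ofNat, ofReal_re, ofReal_im, one_re, one_im, I_re, I_im]
  ring

lemma lineForm_polynomial_le {t : ℝ} (ht : 20 ≤ t) :
    (t ^ 2 + 1 / 8) * (t ^ 2 + 8) * (t ^ 2 + 200) / t ^ 3 * (3 * t ^ 2 + 2 * t + 5) +
        (t ^ 2 + 1 / 4) * (t ^ 2 + 1 / 36) * (t ^ 2 + 400) / 10 ^ 10 ≤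
      -10 + 2079 / 8 * t ^ 2 + 103 / 2 * t ^ 4 +
        A.re * (5 - 3647 / 16 * t ^ 2 + 157 * t ^ 4 + 3 * t ^ 6) := by
  have hA : 0.0471975 ≤ A.re := by
    rw [A, show (Real.pi / 3 - 1 : ℂ) = ((Real.pi / 3 - 1 : ℝ) : ℂ) by push_cast; rfl, ofReal_re]
    linarith [Real.pi_gt_d20]
  obtain ⟨u, hu, rfl⟩ : ∃ u : ℝ, 0 ≤ u ∧ t = u + 20 := ⟨t - 20, by linarith, by ring⟩
  have hcoeff : 0 ≤ 5 - 3647 / 16 * (u + 20) ^ 2 + 157 * (u + 20) ^ 4 + 3 * (u + 20) ^ 6 := by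
    ring_nf
    positivity
  refine le_trans ?_ (add_le_add_right (mul_le_mul_of_nonneg_right hA hcoeff) _)
  rw [← le_sub_iff_add_le, div_mul_eq_mul_div, div_le_iff₀ (by positivity), ← sub_nonneg]
  ring_nf
  positivity

lemma le_re_lineForm_of_twenty_le (ha : ‖a‖ ≤ 1) (hc : ‖c‖ ≤ 1) (hθ : ‖θ‖ ≤ 1) {t : ℝ}
    (ht : 20 ≤ t) : (t ^ 2 + 1 / 4) * (t ^ 2 + 1 / 36) * (t ^ 2 + 400) / 10 ^ 10 ≤
      (lineForm a c θ (t * I)).re := by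
  have hprefactor := norm_lineForm_prefactor_le (by linarith : 0 < t)
  have hremainder := norm_lineForm_remainder_le ha hc hθ (by linarith) (Eq.refl (2⁻¹ + t * I))
  have hprod := (re_le_norm _).trans <| (norm_mul _ _).le.trans <|
    mul_le_mul hprefactor hremainder (norm_nonneg _) (by positivity)
  rw [lineForm, ratioForm, mul_sub, sub_re, re_lineForm_main t rfl]
  linarith [lineForm_polynomial_le ht]

end LargeHeight

lemma conj_A : (starRingEnd ℂ) A = A := by rw [← ofReal_re_A, conj_ofReal]

lemma lineValue_neg (t : ℝ) : lineValue (-t) = (starRingEnd ℂ) (lineValue t) := by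
  simp only [lineValue, lineForm, ratioForm, map_mul, map_sub, map_add, map_inv₀, map_ofNat,
    map_one, ← shiftRatio_conj, conj_A, conj_ofReal, conj_I, ofReal_neg, neg_mul, mul_neg]

lemma le_re_lineValue (t : ℝ) :
    (t ^ 2 + 1 / 4) * (t ^ 2 + 1 / 36) * (t ^ 2 + 400) / 10 ^ 10 ≤ (lineValue t).re := by
  wlog ht : 0 ≤ t generalizing t
  · simpa [lineValue_neg] using this (-t) (by linarith)
  rcases le_total t 20 with hlow | hhigh
  · refine le_trans ?_ (lt_re_lineValue_of_le_twenty ht hlow).le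
    have hsq : t ^ 2 ≤ 400 := by nlinarith
    calc _ ≤ (400 + 1 / 4) * (400 + 1 / 36) * (400 + 400 : ℝ) / 10 ^ 10 := by gcongr
      _ ≤ _ := by norm_num
  · exact le_re_lineForm_of_twenty_le (norm_shiftRatio_le (by simp)) (norm_shiftRatio_le (by simp))
      (norm_shiftRatio_le (by simp)) hhigh

/-! ### Splitting `Z₁` -/

/-- The entire function with `Z₁ s = (s - 1) * splitting s + s * splitting (1 - s)`; the term with
`balance` cancels in this sum and makes `splitting` vanish at `1 / 3` and `2 / 3`. -/
noncomputable def splitting (s : ℂ) : ℂ :=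
  chi (2 * s) * ((s - 1) * (3 * s - 2) * (A * s - A + 1) * chi (s + 1) * chi (3 * s)
      - (s + 1) * (s - 2) * chi s * chi (3 * s - 1) - 2 * (s - 1) * (s - 2) * chi s * chi (3 * s))
    - balance * s * (chi s * chi (3 * s - 1)) * (chi (2 * s) + chi (2 * s - 1))

lemma differentiable_splitting : Differentiable ℂ splitting := by
  have := differentiable_chi
  unfold splitting
  fun_prop

lemma splitting_conj (s : ℂ) : splitting ((starRingEnd ℂ) s) = (starRingEnd ℂ) (splitting s) := by
  simp only [splitting, map_sub, map_add, map_mul, ← chi_conj, conj_A, conj_ofReal, map_ofNat,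
    map_one]

lemma chi_eq_of_add_eq_one {z w : ℂ} (h : z + w = 1) : chi z = chi w := by
  rw [← chi_one_sub, ← h, add_sub_cancel_left]

lemma splitting_one_sub (s : ℂ) : splitting (1 - s) =
    chi (2 * s - 1) * (s * (3 * s - 1) * (1 - A * s) * chi (s - 1) * chi (3 * s - 2)
      - (s + 1) * (s - 2) * chi s * chi (3 * s - 1) - 2 * s * (s + 1) * chi s * chi (3 * s - 2))
    - balance * (1 - s) * (chi s * chi (3 * s - 1)) * (chi (2 * s) + chi (2 * s - 1)) := by
  rw [splitting, chi_one_sub,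
    chi_eq_of_add_eq_one (by ring : 2 * (1 - s) + (2 * s - 1) = 1),
    chi_eq_of_add_eq_one (by ring : 1 - s + 1 + (s - 1) = 1),
    chi_eq_of_add_eq_one (by ring : 3 * (1 - s) + (3 * s - 2) = 1),
    chi_eq_of_add_eq_one (by ring : 3 * (1 - s) - 1 + (3 * s - 1) = 1),
    chi_eq_of_add_eq_one (by ring : 2 * (1 - s) - 1 + 2 * s = 1)]
  ring

lemma Z1_eq_splitting (s : ℂ) : Z1 s = (s - 1) * splitting s + s * splitting (1 - s) := by
  rw [splitting_one_sub, splitting, Z1, f1, f1, chi_one_sub,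
    chi_eq_of_add_eq_one (by ring : 1 - s + 1 + (s - 1) = 1),
    chi_eq_of_add_eq_one (by ring : 3 * (1 - s) + (3 * s - 2) = 1),
    chi_eq_of_add_eq_one (by ring : 3 * (1 - s) - 1 + (3 * s - 1) = 1)]
  ring

lemma chi_two_eq_A_add_one : chi 2 = A + 1 := by rw [chi_two, A, sub_add_cancel]

lemma chi_neg_one : chi (-1) = A + 1 := by
  rw [chi_eq_of_add_eq_one (by norm_num : (-1 : ℂ) + 2 = 1), chi_two_eq_A_add_one]

lemma balance_mul : balance * (chi (4 / 3) + chi (2 / 3)) = 2 * (1 - 2 / 3 * A) * chi (4 / 3) := by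
  have hden : chi (4 / 3) + chi (2 / 3) ≠ 0 := fun h => balance_pos.ne' <| by
    rw [← ofReal_eq_zero, ofReal_balance, ← div_eq_mul_inv 4, ← div_eq_mul_inv 2, h, inv_zero,
      mul_zero]
  rw [ofReal_balance]
  simp only [← div_eq_mul_inv]
  rw [div_mul_cancel₀ _ hden]
  ring

lemma splitting_zero : splitting 0 = 0 := by
  norm_num [splitting, chi_zero, chi_one, chi_neg_one]
  ring

lemma splitting_one_third : splitting (1 / 3) = 0 := by
  norm_num [splitting, chi_zero, chi_one]
  rw [chi_eq_of_add_eq_one (by ring : (1 / 3 : ℂ) + 2 / 3 = 1),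
    chi_eq_of_add_eq_one (by ring : (-(1 / 3) : ℂ) + 4 / 3 = 1)]
  linear_combination (-1 / 3 * chi (2 / 3)) * balance_mul

lemma splitting_two_thirds : splitting (2 / 3) = 0 := by
  norm_num [splitting, chi_one, chi_two_eq_A_add_one]
  rw [chi_eq_of_add_eq_one (by ring : (1 / 3 : ℂ) + 2 / 3 = 1)]
  linear_combination (-2 / 3 * chi (2 / 3)) * balance_mul

lemma differentiable_dslope {f : ℂ → ℂ} (hf : Differentiable ℂ f) (c : ℂ) :
    Differentiable ℂ (dslope f c) := by
  rw [← differentiableOn_univ] at hf ⊢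
  exact (differentiableOn_dslope Filter.univ_mem).mpr hf

lemma sub_mul_dslope_of_eq_zero {f : ℂ → ℂ} {c : ℂ} (hc : f c = 0) (s : ℂ) :
    (s - c) * dslope f c s = f s := by
  rw [← smul_eq_mul, sub_smul_dslope, hc, sub_zero]

lemma dslope_eq_zero_of_ne {f : ℂ → ℂ} {c s : ℂ} (hc : f c = 0) (hs : f s = 0) (hsc : s ≠ c) :
    dslope f c s = 0 := by
  rw [dslope_of_ne f hsc, slope_def_field, hs, hc, sub_zero, zero_div]

/-- The cofactor of the zeros of `splitting` at `0`, `1 / 3` and `2 / 3`. -/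
noncomputable def cofactor : ℂ → ℂ := dslope (dslope (dslope splitting 0) (1 / 3)) (2 / 3)

lemma differentiable_cofactor : Differentiable ℂ cofactor :=
  differentiable_dslope (differentiable_dslope (differentiable_dslope differentiable_splitting _) _)
    _

lemma splitting_eq_mul_cofactor (s : ℂ) :
    splitting s = s * (s - 1 / 3) * (s - 2 / 3) * cofactor s := by
  have hthird := dslope_eq_zero_of_ne splitting_zero splitting_one_third (by norm_num)
  have hthirds := dslope_eq_zero_of_ne hthird
    (dslope_eq_zero_of_ne splitting_zero splitting_two_thirds (by norm_num)) (by norm_num)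
  rw [← sub_mul_dslope_of_eq_zero splitting_zero, ← sub_mul_dslope_of_eq_zero hthird,
    ← sub_mul_dslope_of_eq_zero hthirds, cofactor]
  ring

lemma Z1_eq_mul_cofactor_sub (s : ℂ) :
    Z1 s = s * (s - 1) * (s - 1 / 3) * (s - 2 / 3) * (cofactor s - cofactor (1 - s)) := by
  rw [Z1_eq_splitting, splitting_eq_mul_cofactor, splitting_eq_mul_cofactor (1 - s)]
  ring

/-- The factor `χ (2 s) χ (s + 1) χ (3 s)` of the leading term of `splitting`. -/
noncomputable def leadingFactor (s : ℂ) : ℂ := chi (2 * s) * chi (s + 1) * chi (3 * s)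

lemma differentiable_leadingFactor : Differentiable ℂ leadingFactor := by
  have := differentiable_chi
  unfold leadingFactor
  fun_prop

/-- The quotient `splitting (1 - s) / (χ (2 s) χ (s + 1) χ (3 s))` as a polynomial in `s` and the
ratios `a = χ s / χ (s + 1)`, `c = χ (3 s - 1) / χ (3 s)`, `θ = χ (2 s - 1) / χ (2 s)`,
`p = χ (s - 1) / χ (s + 1)` and `q = χ (3 s - 2) / χ (3 s)`. -/
noncomputable def reflectedForm (a c θ p q s : ℂ) : ℂ :=
  θ * (s * (3 * s - 1) * (1 - A * s) * p * q - (s + 1) * (s - 2) * a * c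
      - 2 * s * (s + 1) * a * q)
    - balance * (1 - s) * a * c * (1 + θ)

section RightHalfPlane

variable {s : ℂ}

lemma leadingFactor_ne_zero (hs : 1 / 2 ≤ s.re) : leadingFactor s ≠ 0 := by
  refine mul_ne_zero (mul_ne_zero (chi_ne_zero ?_) (chi_ne_zero ?_)) (chi_ne_zero ?_) <;>
    simp only [add_re, mul_re, one_re, re_ofNat, im_ofNat] <;> linarith

lemma norm_shiftRatio_two_mul_sub_one_le (hs : 1 / 2 ≤ s.re) : ‖shiftRatio (2 * s - 1)‖ ≤ 1 :=
  norm_shiftRatio_le (by simp only [sub_re, mul_re, one_re, re_ofNat, im_ofNat]; linarith)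

lemma norm_shiftRatio_three_mul_sub_one_le (hs : 1 / 2 ≤ s.re) : ‖shiftRatio (3 * s - 1)‖ ≤ 1 :=
  norm_shiftRatio_le (by simp only [sub_re, mul_re, one_re, re_ofNat, im_ofNat]; linarith)

lemma splitting_eq_leadingFactor_mul (hs : 1 / 2 ≤ s.re) : splitting s = leadingFactor s *
    ratioForm (shiftRatio s) (shiftRatio (3 * s - 1)) (shiftRatio (2 * s - 1)) s := by
  obtain ⟨htwo_one, hthree⟩ := mul_ne_zero_iff.mp (leadingFactor_ne_zero hs)
  obtain ⟨htwo, hone⟩ := mul_ne_zero_iff.mp htwo_one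
  simp only [splitting, leadingFactor, ratioForm, shiftRatio, sub_add_cancel]
  generalize chi (2 * s) = x₂, chi (s + 1) = x₁, chi (3 * s) = x₃ at htwo hone hthree
  field_simp
  ring

lemma exists_splitting_one_sub_eq_leadingFactor_mul (hs : 1 / 2 ≤ s.re) :
    ∃ p q : ℂ, ‖p‖ ≤ 1 ∧ ‖q‖ ≤ 1 ∧ splitting (1 - s) = leadingFactor s * reflectedForm
      (shiftRatio s) (shiftRatio (3 * s - 1)) (shiftRatio (2 * s - 1)) p q s := by
  obtain ⟨htwo_one, hthree⟩ := mul_ne_zero_iff.mp (leadingFactor_ne_zero hs)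
  obtain ⟨htwo, hone⟩ := mul_ne_zero_iff.mp htwo_one
  refine ⟨chi (s - 1) / chi (s + 1), chi (3 * s - 2) / chi (3 * s), ?_, ?_, ?_⟩
  · have h := norm_chi_sub_two_le (w := s + 1) (by rw [add_re, one_re]; linarith)
    rw [show s + 1 - 2 = s - 1 by ring] at h
    rw [norm_div]
    exact div_le_one_of_le₀ h (norm_nonneg _)
  · rw [norm_div]
    refine div_le_one_of_le₀ (norm_chi_sub_two_le ?_) (norm_nonneg _)
    simp only [mul_re, re_ofNat, im_ofNat]
    linarith
  · rw [splitting_one_sub]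
    simp only [leadingFactor, reflectedForm, shiftRatio, sub_add_cancel]
    generalize chi (2 * s) = x₂, chi (s + 1) = x₁, chi (3 * s) = x₃ at htwo hone hthree
    field_simp

end RightHalfPlane

lemma norm_A_le : ‖A‖ ≤ 1 := by
  rw [A, show (Real.pi / 3 - 1 : ℂ) = ((Real.pi / 3 - 1 : ℝ) : ℂ) by push_cast; rfl, norm_real,
    Real.norm_eq_abs, abs_le]
  constructor <;> linarith [Real.pi_gt_three, Real.pi_lt_four]

lemma norm_ofNat_le (n : ℕ) [n.AtLeastTwo] : ‖(ofNat(n) : ℂ)‖ ≤ ofNat(n) :=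
  (norm_ofNat n).le

section Growth

variable {a c θ s : ℂ}

lemma norm_ratioForm_le (ha : ‖a‖ ≤ 1) (hc : ‖c‖ ≤ 1) (hθ : ‖θ‖ ≤ 1) (hs : 2 ≤ ‖s‖) :
    ‖ratioForm a c θ s‖ ≤ 100 * ‖s‖ ^ 3 := by
  have hone : ‖(1 : ℂ)‖ ≤ 1 := norm_one.le
  have hlinear : ‖ratioForm a c θ s‖ ≤
      (‖s‖ + 1) * (3 * ‖s‖ + 2) * (1 * (‖s‖ + 1) + 1) + 1 * (2 * (‖s‖ + 1) * (‖s‖ + 2) +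
        1 * ((‖s‖ + 1) * (‖s‖ + 2) + 1 * ‖s‖ * (1 + 1))) := by
    apply_rules [norm_A_le, norm_balance_le, norm_sub_le_of_le, norm_add_le_of_le,
      norm_mul_le_of_le, le_refl, norm_ofNat_le]
  refine hlinear.trans ?_
  obtain ⟨r, hr, hsr⟩ : ∃ r, 0 ≤ r ∧ ‖s‖ = r + 2 := ⟨‖s‖ - 2, by linarith, by ring⟩
  rw [hsr, ← sub_nonneg]
  ring_nf
  positivity

lemma norm_reflectedForm_le (ha : ‖a‖ ≤ 1) (hc : ‖c‖ ≤ 1) (hθ : ‖θ‖ ≤ 1) (hs : 2 ≤ ‖s‖)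
    {p q : ℂ} (hp : ‖p‖ ≤ 1) (hq : ‖q‖ ≤ 1) :
    ‖reflectedForm a c θ p q s‖ ≤ 100 * ‖s‖ ^ 3 := by
  have hone : ‖(1 : ℂ)‖ ≤ 1 := norm_one.le
  have hlinear : ‖reflectedForm a c θ p q s‖ ≤
      1 * (‖s‖ * (3 * ‖s‖ + 1) * (1 + 1 * ‖s‖) * 1 * 1 + (‖s‖ + 1) * (‖s‖ + 2) * 1 * 1 +
        2 * ‖s‖ * (‖s‖ + 1) * 1 * 1) + 1 * (1 + ‖s‖) * 1 * 1 * (1 + 1) := by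
    refine norm_sub_le_of_le ?_ ?_ <;>
    apply_rules [norm_A_le, norm_balance_le, norm_sub_le_of_le, norm_add_le_of_le,
      norm_mul_le_of_le, le_refl, norm_ofNat_le]
  refine hlinear.trans ?_
  obtain ⟨r, hr, hsr⟩ : ∃ r, 0 ≤ r ∧ ‖s‖ = r + 2 := ⟨‖s‖ - 2, by linarith, by ring⟩
  rw [hsr, ← sub_nonneg]
  ring_nf
  positivity

end Growth

lemma half_norm_le_norm_sub {s : ℂ} {x : ℝ} (hx₀ : 0 ≤ x) (hx₁ : x ≤ 1) (hs : 2 ≤ ‖s‖) :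
    ‖s‖ / 2 ≤ ‖s - x‖ := by
  have h := norm_sub_norm_le s x
  rw [norm_real, Real.norm_of_nonneg hx₀] at h
  linarith

lemma norm_pow_three_le {s : ℂ} (hs : 2 ≤ ‖s‖) {x : ℝ} (hx₀ : 0 ≤ x) (hx₁ : x ≤ 1) :
    ‖s‖ ^ 3 ≤ 8 * ‖(s - x) * (s - 1 / 3) * (s - 2 / 3)‖ := by
  have hx := half_norm_le_norm_sub hx₀ hx₁ hs
  have hthird := half_norm_le_norm_sub (x := 1 / 3) (by norm_num) (by norm_num) hs
  have hthirds := half_norm_le_norm_sub (x := 2 / 3) (by norm_num) (by norm_num) hs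
  push_cast at hthird hthirds
  rw [norm_mul, norm_mul]
  calc ‖s‖ ^ 3 = 8 * (‖s‖ / 2 * (‖s‖ / 2) * (‖s‖ / 2)) := by ring
    _ ≤ _ := by gcongr

lemma norm_le_of_mul_eq_mul {d x y z : ℂ} {r m n : ℝ} (h : d * x = y * z) (hr : 0 < r)
    (hd : r ≤ m * ‖d‖) (hm : 0 ≤ m) (hz : ‖z‖ ≤ n * r) : ‖x‖ ≤ m * n * ‖y‖ := by
  refine le_of_mul_le_mul_left ?_ hr
  calc r * ‖x‖ ≤ m * ‖d‖ * ‖x‖ := by gcongr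
    _ = m * (‖y‖ * ‖z‖) := by rw [mul_assoc, ← norm_mul, h, norm_mul]
    _ ≤ m * (‖y‖ * (n * r)) := by gcongr
    _ = r * (m * n * ‖y‖) := by ring

lemma norm_cofactor_le {s : ℂ} (hre : 1 / 2 ≤ s.re) (hs : 2 ≤ ‖s‖) :
    ‖cofactor s‖ ≤ 800 * ‖leadingFactor s‖ := by
  have h := splitting_eq_leadingFactor_mul hre
  rw [splitting_eq_mul_cofactor] at h
  have hcubic := norm_pow_three_le hs le_rfl zero_le_one
  rw [ofReal_zero, sub_zero] at hcubic
  have hform := norm_ratioForm_le (norm_shiftRatio_le (by linarith))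
    (norm_shiftRatio_three_mul_sub_one_le hre) (norm_shiftRatio_two_mul_sub_one_le hre) hs
  linarith [norm_le_of_mul_eq_mul h (by positivity) hcubic (by norm_num) hform]

lemma norm_cofactor_one_sub_le {s : ℂ} (hre : 1 / 2 ≤ s.re) (hs : 2 ≤ ‖s‖) :
    ‖cofactor (1 - s)‖ ≤ 800 * ‖leadingFactor s‖ := by
  obtain ⟨p, q, hp, hq, h⟩ := exists_splitting_one_sub_eq_leadingFactor_mul hre
  rw [splitting_eq_mul_cofactor] at h
  have hcubic := norm_pow_three_le hs zero_le_one le_rfl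
  rw [show (s - (1 : ℝ)) * (s - 1 / 3) * (s - 2 / 3) =
    -((1 - s) * (1 - s - 1 / 3) * (1 - s - 2 / 3)) by push_cast; ring, norm_neg] at hcubic
  have hform := norm_reflectedForm_le (norm_shiftRatio_le (by linarith))
    (norm_shiftRatio_three_mul_sub_one_le hre) (norm_shiftRatio_two_mul_sub_one_le hre) hs hp hq
  linarith [norm_le_of_mul_eq_mul h (by positivity) hcubic (by norm_num) hform]

/-! ### Holomorphic functions on the right half-plane -/

section RightHalfPlane

variable {f : ℂ → ℂ}

lemma exists_norm_le_of_forall_le_norm (hf : ∀ z : ℂ, 0 ≤ z.re → DifferentiableAt ℂ f z)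
    {B R : ℝ} (h : ∀ z : ℂ, 0 ≤ z.re → R ≤ ‖z‖ → ‖f z‖ ≤ B) :
    ∃ C, ∀ z : ℂ, 0 ≤ z.re → ‖f z‖ ≤ C := by
  have hcompact : IsCompact (Metric.closedBall (0 : ℂ) R ∩ {z : ℂ | 0 ≤ z.re}) :=
    (isCompact_closedBall 0 R).inter_right (isClosed_le continuous_const continuous_re)
  obtain ⟨M, hM⟩ := hcompact.exists_bound_of_continuousOn (f := f)
    (fun z hz => (hf z hz.2).continuousAt.continuousWithinAt)
  refine ⟨max M B, fun z hz => ?_⟩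
  rcases le_total ‖z‖ R with hzR | hzR
  · exact (hM z ⟨by simpa using hzR, hz⟩).trans (le_max_left _ _)
  · exact (h z hz hzR).trans (le_max_right _ _)

lemma norm_le_of_forall_norm_mul_I_le (hf : ∀ z : ℂ, 0 ≤ z.re → DifferentiableAt ℂ f z) {B C : ℝ}
    (hB : ∀ z : ℂ, 0 ≤ z.re → ‖f z‖ ≤ B) (hC : ∀ t : ℝ, ‖f (t * I)‖ ≤ C) {z : ℂ}
    (hz : 0 ≤ z.re) : ‖f z‖ ≤ C := by
  refine PhragmenLindelof.right_half_plane_of_bounded_on_real (f := f) ?_ ⟨0, by norm_num, 0, ?_⟩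
    ⟨B, Filter.eventually_map.mpr ?_⟩ hC hz
  · apply DifferentiableOn.diffContOnCl
    rw [closure_setOfPred_lt_re]
    exact fun z hz => (hf z hz).differentiableWithinAt
  · refine Asymptotics.IsBigO.of_bound B (Filter.eventually_inf_principal.mpr
      (Filter.Eventually.of_forall fun z hz => ?_))
    simpa using hB z (le_of_lt hz)
  · filter_upwards [Filter.eventually_ge_atTop 0] with x hx using hB _ (by simpa using hx)

lemma le_re_of_forall_le_re_mul_I (hf : ∀ z : ℂ, 0 ≤ z.re → DifferentiableAt ℂ f z) {B c : ℝ}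
    (hB : ∀ z : ℂ, 0 ≤ z.re → ‖f z‖ ≤ B) (hc : ∀ t : ℝ, c ≤ (f (t * I)).re) {z : ℂ}
    (hz : 0 ≤ z.re) : c ≤ (f z).re := by
  have h := norm_le_of_forall_norm_mul_I_le (f := fun z => exp (-f z)) (B := Real.exp B)
    (C := Real.exp (-c)) (fun z hz => (hf z hz).neg.cexp) (fun z hz => ?_) (fun t => ?_) hz
  · rw [norm_exp, Real.exp_le_exp, neg_re] at h
    linarith
  · rw [norm_exp, Real.exp_le_exp]
    exact (re_le_norm _).trans ((norm_neg _).trans_le (hB z hz))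
  · rw [norm_exp, Real.exp_le_exp, neg_re]
    linarith [hc t]

lemma ne_one_of_norm_le_one (hf : ∀ z : ℂ, 0 < z.re → DifferentiableAt ℂ f z)
    (hle : ∀ z : ℂ, 0 < z.re → ‖f z‖ ≤ 1) {w : ℂ} (hw : 0 < w.re) (hfw : f w ≠ 1) {z : ℂ}
    (hz : 0 < z.re) : f z ≠ 1 := fun h => hfw <| by
  have heq := eqOn_of_isPreconnected_of_isMaxOn_norm
    (convex_halfSpace_re_gt 0).isPreconnected (isOpen_lt continuous_const continuous_re)
    (fun u hu => (hf u hu).differentiableWithinAt) hz (fun u hu => by simpa [h] using hle u hu)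
  simpa [h] using heq hw

end RightHalfPlane

/-! ### Zeros of `Z₁` -/

/-- The quotient `cofactor / leadingFactor`, with the origin moved to `1 / 2`, times a factor which
makes its real part positive. -/
noncomputable def normalizedCofactor (z : ℂ) : ℂ :=
  cofactor (2⁻¹ + z) / leadingFactor (2⁻¹ + z) * ((z + 4) / (z + 20))

/-- The quotient of the two terms of `cofactor (1 - s) - cofactor s`, with the origin moved to
`1 / 2`. -/
noncomputable def reflectionRatio (z : ℂ) : ℂ := cofactor (2⁻¹ - z) / cofactor (2⁻¹ + z)

section RightHalfPlane

variable {z : ℂ}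

lemma half_le_re_half_add (hz : 0 ≤ z.re) : 1 / 2 ≤ (2⁻¹ + z).re := by
  simp [hz]

lemma two_le_norm_half_add (hz : 3 ≤ ‖z‖) : 2 ≤ ‖2⁻¹ + z‖ := by
  have h := norm_sub_norm_le z (-2⁻¹)
  rw [sub_neg_eq_add, add_comm z, norm_neg, norm_inv, norm_ofNat] at h
  linarith

lemma add_twenty_ne_zero (hz : 0 ≤ z.re) : z + 20 ≠ 0 := fun h => by
  have hre := congrArg re h
  rw [add_re, re_ofNat, zero_re] at hre
  linarith

lemma norm_add_four_div_add_twenty_le (hz : 0 ≤ z.re) : ‖(z + 4) / (z + 20)‖ ≤ 1 := by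
  rw [norm_div]
  refine div_le_one_of_le₀ (norm_le_of_normSq_le (norm_nonneg _) ?_) (norm_nonneg _)
  rw [← normSq_eq_norm_sq, normSq_apply, normSq_apply]
  simp only [add_re, add_im, re_ofNat, im_ofNat]
  nlinarith

lemma differentiableAt_normalizedCofactor (hz : 0 ≤ z.re) :
    DifferentiableAt ℂ normalizedCofactor z := by
  have hcofactor := differentiable_cofactor
  have hleading := differentiable_leadingFactor
  have hleading_ne := leadingFactor_ne_zero (half_le_re_half_add hz)
  have htwenty_ne := add_twenty_ne_zero hz
  unfold normalizedCofactor
  fun_prop (disch := assumption)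

lemma exists_norm_normalizedCofactor_le :
    ∃ B, ∀ z : ℂ, 0 ≤ z.re → ‖normalizedCofactor z‖ ≤ B := by
  refine exists_norm_le_of_forall_le_norm (R := 3) (B := 800 * 1)
    (fun z hz => differentiableAt_normalizedCofactor hz) fun z hz hlarge => ?_
  refine norm_mul_le_of_le ?_ (norm_add_four_div_add_twenty_le hz)
  rw [norm_div]
  exact div_le_of_le_mul₀ (norm_nonneg _) (by norm_num)
    (norm_cofactor_le (half_le_re_half_add hz) (two_le_norm_half_add hlarge))

lemma lineValue_eq_mul_normalizedCofactor (t : ℝ) : lineValue t =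
    ((t ^ 2 + 1 / 4) * (t ^ 2 + 1 / 36) * (t ^ 2 + 400) : ℝ) * normalizedCofactor (t * I) := by
  have hre : 1 / 2 ≤ (2⁻¹ + t * I).re := half_le_re_half_add (by simp)
  have hleading := leadingFactor_ne_zero hre
  have htwenty : t * I + 20 ≠ 0 := add_twenty_ne_zero (by simp)
  have hratio := splitting_eq_leadingFactor_mul hre
  rw [splitting_eq_mul_cofactor, show 3 * (2⁻¹ + t * I) - 1 = 2⁻¹ + 3 * (t * I) by ring,
    show 2 * (2⁻¹ + t * I) - 1 = 2 * (t * I) by ring, mul_comm (leadingFactor _),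
    ← div_eq_iff hleading] at hratio
  have hsq (x : ℂ) : (t : ℂ) ^ 2 + x ^ 2 = (x + t * I) * (x - t * I) := by
    linear_combination (t : ℂ) ^ 2 * I_sq
  rw [lineValue, lineForm, ← hratio, normalizedCofactor]
  push_cast
  rw [show (1 / 4 : ℂ) = 2⁻¹ ^ 2 by norm_num, show (1 / 36 : ℂ) = (1 / 6) ^ 2 by norm_num,
    show (400 : ℂ) = 20 ^ 2 by norm_num, hsq, hsq, hsq]
  field_simp
  ring

lemma le_re_normalizedCofactor (hz : 0 ≤ z.re) : 1 / 10 ^ 10 ≤ (normalizedCofactor z).re := by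
  obtain ⟨B, hB⟩ := exists_norm_normalizedCofactor_le
  refine le_re_of_forall_le_re_mul_I (fun z hz => differentiableAt_normalizedCofactor hz) hB
    (fun t => ?_) hz
  have h := le_re_lineValue t
  rw [lineValue_eq_mul_normalizedCofactor, re_ofReal_mul] at h
  refine le_of_mul_le_mul_left ?_
    (by positivity : 0 < (t ^ 2 + 1 / 4) * (t ^ 2 + 1 / 36) * (t ^ 2 + 400))
  rwa [mul_one_div]

lemma norm_leadingFactor_le (hz : 0 ≤ z.re) :
    ‖leadingFactor (2⁻¹ + z)‖ ≤ 10 ^ 10 * ‖cofactor (2⁻¹ + z)‖ := by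
  have hpos := norm_pos_iff.mpr (leadingFactor_ne_zero (half_le_re_half_add hz))
  have h : 1 / 10 ^ 10 ≤ ‖cofactor (2⁻¹ + z)‖ / ‖leadingFactor (2⁻¹ + z)‖ :=
    calc 1 / 10 ^ 10 ≤ ‖normalizedCofactor z‖ := (le_re_normalizedCofactor hz).trans (re_le_norm _)
      _ ≤ _ := by
        rw [normalizedCofactor, norm_mul, ← norm_div]
        exact mul_le_of_le_one_right (norm_nonneg _) (norm_add_four_div_add_twenty_le hz)
  rw [le_div_iff₀ hpos] at h
  linarith

lemma cofactor_half_add_ne_zero (hz : 0 ≤ z.re) : cofactor (2⁻¹ + z) ≠ 0 := fun h => by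
  have hle := norm_leadingFactor_le hz
  rw [h, norm_zero, mul_zero] at hle
  exact leadingFactor_ne_zero (half_le_re_half_add hz) (norm_le_zero_iff.mp hle)

lemma differentiableAt_reflectionRatio (hz : 0 ≤ z.re) : DifferentiableAt ℂ reflectionRatio z := by
  have hcofactor := differentiable_cofactor
  have hne := cofactor_half_add_ne_zero hz
  unfold reflectionRatio
  fun_prop (disch := assumption)

lemma exists_norm_reflectionRatio_le : ∃ B, ∀ z : ℂ, 0 ≤ z.re → ‖reflectionRatio z‖ ≤ B := by
  refine exists_norm_le_of_forall_le_norm (R := 3) (B := 800 * 10 ^ 10)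
    (fun z hz => differentiableAt_reflectionRatio hz) fun z hz hlarge => ?_
  have h := norm_cofactor_one_sub_le (half_le_re_half_add hz) (two_le_norm_half_add hlarge)
  rw [show 1 - (2⁻¹ + z) = 2⁻¹ - z by ring] at h
  rw [reflectionRatio, norm_div]
  exact div_le_of_le_mul₀ (norm_nonneg _) (by norm_num) (by linarith [norm_leadingFactor_le hz])

lemma norm_reflectionRatio_mul_I_le (t : ℝ) : ‖reflectionRatio (t * I)‖ ≤ 1 := by
  set s : ℂ := 2⁻¹ + t * I with hs
  have hconj : 2⁻¹ - t * I = (starRingEnd ℂ) s := by simp [hs, map_ofNat, sub_eq_add_neg]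
  have hcubic : s * (s - 1 / 3) * (s - 2 / 3) ≠ 0 := by
    refine mul_ne_zero (mul_ne_zero ?_ ?_) ?_ <;> intro h <;> have := congrArg re h <;>
      norm_num [hs] at this
  have h := congrArg norm (splitting_conj s)
  rw [norm_conj, splitting_eq_mul_cofactor, splitting_eq_mul_cofactor,
    show (starRingEnd ℂ) s * ((starRingEnd ℂ) s - 1 / 3) * ((starRingEnd ℂ) s - 2 / 3) =
      (starRingEnd ℂ) (s * (s - 1 / 3) * (s - 2 / 3)) by simp [map_ofNat],
    norm_mul, norm_conj, norm_mul _ (cofactor s)] at h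
  rw [reflectionRatio, ← hs, hconj, norm_div, mul_left_cancel₀ (norm_ne_zero_iff.mpr hcubic) h]
  exact div_self_le_one _

lemma norm_reflectionRatio_le (hz : 0 ≤ z.re) : ‖reflectionRatio z‖ ≤ 1 := by
  obtain ⟨B, hB⟩ := exists_norm_reflectionRatio_le
  exact norm_le_of_forall_norm_mul_I_le (fun z hz => differentiableAt_reflectionRatio hz) hB
    norm_reflectionRatio_mul_I_le hz

end RightHalfPlane

lemma Z1_two_ne_zero : Z1 2 ≠ 0 := by
  have hvalue : Z1 2 = 4 * chi 3 * chi 4 *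
      ((Real.pi / 3 * (4 / 63 * Real.pi ^ 3) - (16 * Real.pi / 3 - 15) : ℝ)) := by
    have hthree : chi (-3) = chi 4 := chi_eq_of_add_eq_one (by norm_num)
    norm_num [Z1, f1, hthree, chi_neg_one, chi_two, chi_six, chi_zero, A]
    ring
  rw [hvalue]
  refine mul_ne_zero (mul_ne_zero (mul_ne_zero (by norm_num) (chi_ne_zero (by norm_num)))
    (chi_ne_zero (by norm_num))) (ofReal_ne_zero.mpr (ne_of_gt ?_))
  have hlower := Real.pi_gt_d2
  have hupper := Real.pi_lt_d2
  have hcube : 30 ≤ Real.pi ^ 3 :=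
    calc (30 : ℝ) ≤ 3.14 ^ 3 := by norm_num
      _ ≤ _ := by gcongr
  nlinarith

lemma reflectionRatio_ne_one {z : ℂ} (hz : 0 < z.re) : reflectionRatio z ≠ 1 := by
  refine ne_one_of_norm_le_one (fun z hz => differentiableAt_reflectionRatio hz.le)
    (fun z hz => norm_reflectionRatio_le hz.le) (w := 3 / 2) (by norm_num) (fun h => ?_) hz
  rw [reflectionRatio, div_eq_one_iff_eq (cofactor_half_add_ne_zero (by norm_num))] at h
  refine Z1_two_ne_zero ?_
  rw [Z1_eq_mul_cofactor_sub]
  norm_num at h ⊢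
  rw [h, sub_self]

lemma cofactor_ne_cofactor_one_sub {s : ℂ} (hs : s.re ≠ 1 / 2) :
    cofactor s ≠ cofactor (1 - s) := by
  wlog hlt : 1 / 2 < s.re generalizing s
  · have hsub : (1 - s).re = 1 - s.re := by simp
    simpa using (this (s := 1 - s) (fun h => hs (by linarith))
      (by rw [hsub]; linarith [lt_of_le_of_ne (not_lt.mp hlt) hs])).symm
  have hz : 0 < (s - 2⁻¹).re := by simpa using hlt
  intro h
  refine reflectionRatio_ne_one hz ?_
  rw [reflectionRatio, div_eq_one_iff_eq (cofactor_half_add_ne_zero hz.le), add_sub_cancel, h]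
  congr 1
  ring

lemma eq_zero_and_deriv_ne_zero_of_eq_sub_mul {f g : ℂ → ℂ} {c : ℂ} (hg : DifferentiableAt ℂ g c)
    (hf : ∀ s, f s = (s - c) * g s) (hc : g c ≠ 0) : f c = 0 ∧ deriv f c ≠ 0 := by
  refine ⟨by rw [hf, sub_self, zero_mul], ?_⟩
  have hderiv : HasDerivAt f (g c) c := by
    rw [funext hf]
    simpa using ((hasDerivAt_id c).sub_const c).fun_mul hg.hasDerivAt
  rwa [hderiv.deriv]

lemma re_eq_half_of_Z1_eq_zero {ρ : ℂ} (hρ : Z1 ρ = 0)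
    (hmem : ρ ∉ ({0, 1 / 3, 2 / 3, 1} : Set ℂ)) : ρ.re = 1 / 2 := by
  by_contra hre
  simp only [Set.mem_insert_iff, Set.mem_singleton_iff, not_or] at hmem
  obtain ⟨hzero, hthird, hthirds, hone⟩ := hmem
  rw [Z1_eq_mul_cofactor_sub] at hρ
  exact mul_ne_zero (mul_ne_zero (mul_ne_zero (mul_ne_zero hzero (sub_ne_zero.mpr hone))
    (sub_ne_zero.mpr hthird)) (sub_ne_zero.mpr hthirds))
    (sub_ne_zero.mpr (cofactor_ne_cofactor_one_sub hre)) hρ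

lemma Z1_eq_zero_and_deriv_ne_zero_of_factor {p : ℂ → ℂ} {c : ℂ} (hp : DifferentiableAt ℂ p c)
    (hfactor : ∀ s : ℂ, s * (s - 1) * (s - 1 / 3) * (s - 2 / 3) = (s - c) * p s) (hpc : p c ≠ 0)
    (hc : c.re ≠ 1 / 2) : Z1 c = 0 ∧ deriv Z1 c ≠ 0 := by
  have hcofactor := differentiable_cofactor
  refine eq_zero_and_deriv_ne_zero_of_eq_sub_mul
    (g := fun s => p s * (cofactor s - cofactor (1 - s))) (by fun_prop) (fun s => ?_)
    (mul_ne_zero hpc (sub_ne_zero.mpr (cofactor_ne_cofactor_one_sub hc)))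
  rw [Z1_eq_mul_cofactor_sub, hfactor, mul_assoc]

lemma Z1_eq_zero_and_deriv_ne_zero {ρ : ℂ} (hρ : ρ ∈ ({0, 1 / 3, 2 / 3, 1} : Set ℂ)) :
    Z1 ρ = 0 ∧ deriv Z1 ρ ≠ 0 := by
  simp only [Set.mem_insert_iff, Set.mem_singleton_iff] at hρ
  rcases hρ with rfl | rfl | rfl | rfl
  · exact Z1_eq_zero_and_deriv_ne_zero_of_factor (p := fun s => (s - 1) * (s - 1 / 3) * (s - 2 / 3))
      (by fun_prop) (fun s => by ring) (by norm_num) (by norm_num)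
  · exact Z1_eq_zero_and_deriv_ne_zero_of_factor (p := fun s => s * (s - 1) * (s - 2 / 3))
      (by fun_prop) (fun s => by ring) (by norm_num) (by norm_num)
  · exact Z1_eq_zero_and_deriv_ne_zero_of_factor (p := fun s => s * (s - 1) * (s - 1 / 3))
      (by fun_prop) (fun s => by ring) (by norm_num) (by norm_num)
  · exact Z1_eq_zero_and_deriv_ne_zero_of_factor (p := fun s => s * (s - 1 / 3) * (s - 2 / 3))
      (by fun_prop) (fun s => by ring) (by norm_num) (by norm_num)

end XiQuotient

theorem Z1_zeros (ρ : ℂ) :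
    (Z1 ρ = 0 → ρ ∉ ({0, 1/3, 2/3, 1} : Set ℂ) → ρ.re = 1 / 2) ∧
    (ρ ∈ ({0, 1/3, 2/3, 1} : Set ℂ) → Z1 ρ = 0 ∧ deriv Z1 ρ ≠ 0) :=
  ⟨XiQuotient.re_eq_half_of_Z1_eq_zero, XiQuotient.Z1_eq_zero_and_deriv_ne_zero⟩
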